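/- Reformulated symmetrized Talagrand inequality: Let d ≥ 1. For every centered probability measure μ on ℝ^d and every probability measure ν on ℝ^d, both absolutely continuous with respect to Lebesgue measure with finite second moments and finite entropy relative to Lebesgue measure, one has inf_π ( − ∫ x·y dπ(x,y) ) ≤ Ent_{dx}(μ) + Ent_{dx}(ν) + d log(2π), where the infimum is over all couplings π of μ and ν. -/

import Mathlib

open MeasureTheory
open scoped RealInnerProductSpace ENNReal

/-- `π` is a coupling of `μ` and `ν`: a measure on the product with the given marginals. -/
def IsCoupling {E : Type*} [MeasurableSpace E] (π : Measure (E × E)) (μ ν : Measure E) : Prop :=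
  π.map Prod.fst = μ ∧ π.map Prod.snd = ν

section Auxiliary

open Set
open scoped Pointwise

theorem volume_add_volume_le_of_add_mem {A B C : Set ℝ} (hA : MeasurableSet A)
    (hB : MeasurableSet B) (hA' : A.Nonempty) (hB' : B.Nonempty)
    (hC : ∀ a ∈ A, ∀ b ∈ B, a + b ∈ C) : volume A + volume B ≤ volume C := by
  have hleft : ∀ (a : ℝ) (S : Set ℝ), volume ((fun x => a + x) '' S) = volume S := by
    intro a S
    simp
  rcases eq_or_ne (volume A) 0 with h0 | hA0
  · obtain ⟨a, ha⟩ := hA'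
    rw [h0, zero_add, ← hleft a B]
    exact measure_mono (by rintro _ ⟨b, hb, rfl⟩; exact hC a ha b hb)
  rcases eq_or_ne (volume B) 0 with h0 | hB0
  · obtain ⟨b, hb⟩ := hB'
    rw [h0, add_zero, ← hleft b A]
    refine measure_mono ?_
    rintro _ ⟨a, ha, rfl⟩
    simpa [add_comm] using hC a ha b hb
  refine le_of_forall_lt fun r hr => ?_
  obtain ⟨y, hy, z, hz, hyz⟩ := ENNReal.exists_lt_add_of_lt_add hr hA0 hB0
  obtain ⟨K, hKA, hK, hyK⟩ := hA.exists_lt_isCompact hy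
  obtain ⟨L, hLB, hL, hzL⟩ := hB.exists_lt_isCompact hz
  have hKne : K.Nonempty := nonempty_of_measure_ne_zero (ne_bot_of_gt hyK)
  have hLne : L.Nonempty := nonempty_of_measure_ne_zero (ne_bot_of_gt hzL)
  have hk := hK.sSup_mem hKne
  have hl := hL.sInf_mem hLne
  set k := sSup K
  set l := sInf L
  have hsub : ((fun x => l + x) '' K) \ {k + l} ∪ (fun x => k + x) '' L ⊆ C := by
    rintro _ (⟨⟨a, ha, rfl⟩, -⟩ | ⟨b, hb, rfl⟩)
    · simpa [add_comm] using hC a (hKA ha) l (hLB hl)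
    · exact hC k (hKA hk) b (hLB hb)
  have hdisj : Disjoint (((fun x => l + x) '' K) \ {k + l}) ((fun x => k + x) '' L) := by
    rw [Set.disjoint_left]
    rintro _ ⟨⟨a, ha, rfl⟩, hne⟩ ⟨b, hb, hab⟩
    have h1 : a ≤ k := le_csSup hK.bddAbove ha
    have h2 : l ≤ b := csInf_le hL.bddBelow hb
    simp only [mem_singleton_iff] at hne hab
    exact hne (by linarith)
  calc r < y + z := hyz
    _ ≤ volume K + volume L := add_le_add hyK.le hzL.le
    _ = volume (((fun x => l + x) '' K) \ {k + l} ∪ (fun x => k + x) '' L) := by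
      rw [measure_union hdisj (hL.image (by fun_prop)).measurableSet,
        measure_sdiff_null (by simp), hleft, hleft]
    _ ≤ volume C := measure_mono hsub

theorem ENNReal.four_mul_le_add_sq (x y : ℝ≥0∞) : 4 * (x * y) ≤ (x + y) ^ 2 := by
  rcases eq_or_ne x ⊤ with rfl | hx
  · simp
  rcases eq_or_ne y ⊤ with rfl | hy
  · simp
  lift x to NNReal using hx
  lift y to NNReal using hy
  norm_cast
  rw [← NNReal.coe_le_coe]
  push_cast
  nlinarith [sq_nonneg ((x : ℝ) - y)]

theorem lintegral_add_le_of_sup_eq_one {u v H : ℝ → ℝ} (hu : Measurable u) (hv : Measurable v)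
    (hH : Measurable H) (hu0 : ∀ x, 0 ≤ u x) (hv0 : ∀ x, 0 ≤ v x) (hH0 : ∀ x, 0 ≤ H x)
    (hu1 : IsLUB (range u) 1) (hv1 : IsLUB (range v) 1)
    (h : ∀ a b, u a * v b ≤ H ((a + b) / 2) ^ 2) :
    (∫⁻ x, ENNReal.ofReal (u x)) + ∫⁻ x, ENNReal.ofReal (v x)
      ≤ 2 * ∫⁻ x, ENNReal.ofReal (H x) := by
  have key : ∀ f : ℝ → ℝ, Measurable f → (∀ x, 0 ≤ f x) →
      ∫⁻ x, ENNReal.ofReal (f x) = ∫⁻ t in Ioi (0 : ℝ), volume {x | t < f x} := fun f hf hf0 =>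
    lintegral_eq_lintegral_meas_lt _ (ae_of_all _ hf0) hf.aemeasurable
  have hmeas : ∀ f : ℝ → ℝ, Measurable fun t : ℝ => volume {x | t < f x} := fun f =>
    Antitone.measurable fun s t hst => measure_mono fun x (hx : t < f x) => hst.trans_lt hx
  rw [key u hu hu0, key v hv hv0, key H hH hH0, ← lintegral_add_left (hmeas u),
    ← lintegral_const_mul _ (hmeas H)]
  refine setLIntegral_mono ((hmeas H).const_mul 2) fun t ht => ?_
  have ht : 0 < t := ht
  rcases lt_or_ge t 1 with ht1 | ht1
  · obtain ⟨_, ⟨a, rfl⟩, ha⟩ := (lt_isLUB_iff hu1).1 ht1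
    obtain ⟨_, ⟨b, rfl⟩, hb⟩ := (lt_isLUB_iff hv1).1 ht1
    have hvol : volume ((2 : ℝ) • {x | t < H x}) = 2 * volume {x | t < H x} := by
      rw [Measure.addHaar_smul]; simp
    rw [← hvol]
    refine volume_add_volume_le_of_add_mem (measurableSet_lt measurable_const hu)
      (measurableSet_lt measurable_const hv) ⟨a, ha⟩ ⟨b, hb⟩ fun a ha b hb => ?_
    refine ⟨(a + b) / 2, ?_, by simp [mul_div_cancel₀]⟩
    have ha : t < u a := ha
    have hb : t < v b := hb
    have : t ^ 2 < H ((a + b) / 2) ^ 2 := by nlinarith [h a b]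
    exact lt_of_pow_lt_pow_left₀ 2 (hH0 _) this
  · have e : ∀ f : ℝ → ℝ, IsLUB (range f) 1 → {x | t < f x} = ∅ := fun f hf => by
      ext x
      simpa using (hf.1 ⟨x, rfl⟩).trans ht1
    simp [e u hu1, e v hv1]

theorem lintegral_mul_lintegral_le_of_bounded {u v H : ℝ → ℝ} (hu : Measurable u)
    (hv : Measurable v) (hH : Measurable H) (hu0 : ∀ x, 0 ≤ u x) (hv0 : ∀ x, 0 ≤ v x)
    (hH0 : ∀ x, 0 ≤ H x) (hub : BddAbove (range u)) (hvb : BddAbove (range v))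
    (h : ∀ a b, u a * v b ≤ H ((a + b) / 2) ^ 2) :
    (∫⁻ x, ENNReal.ofReal (u x)) * ∫⁻ x, ENNReal.ofReal (v x)
      ≤ (∫⁻ x, ENNReal.ofReal (H x)) ^ 2 := by
  by_cases hu' : ∀ x, u x = 0
  · simp [hu']
  by_cases hv' : ∀ x, v x = 0
  · simp [hv']
  have pos : ∀ f : ℝ → ℝ, (∀ x, 0 ≤ f x) → BddAbove (range f) → (¬ ∀ x, f x = 0) →
      0 < sSup (range f) := fun f hf hb hne => by
    push Not at hne
    obtain ⟨x, hx⟩ := hne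
    exact ((hf x).lt_of_ne' hx).trans_le (le_csSup hb ⟨x, rfl⟩)
  have lub : ∀ f : ℝ → ℝ, BddAbove (range f) → 0 < sSup (range f) →
      IsLUB (range fun x => (sSup (range f))⁻¹ * f x) 1 := fun f hb hp => by
    have h1 := isLUB_csSup (range_nonempty f) hb
    constructor
    · rintro _ ⟨x, rfl⟩
      have := h1.1 ⟨x, rfl⟩
      simp only
      rw [inv_mul_le_iff₀ hp]
      simpa using this
    · intro b hb'
      have : sSup (range f) ≤ sSup (range f) * b := h1.2 (by
        rintro _ ⟨x, rfl⟩
        have := hb' ⟨x, rfl⟩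
        simp only at this
        rwa [inv_mul_le_iff₀ hp] at this)
      nlinarith
  have hα := pos u hu0 hub hu'
  have hβ := pos v hv0 hvb hv'
  have lu := lub u hub hα
  have lv := lub v hvb hβ
  set α := sSup (range u)
  set β := sSup (range v)
  set γ := √(α⁻¹ * β⁻¹)
  have hγ : γ ^ 2 = α⁻¹ * β⁻¹ := Real.sq_sqrt (by positivity)
  have hγ0 : 0 < γ := Real.sqrt_pos.2 (by positivity)
  have main := lintegral_add_le_of_sup_eq_one (H := fun x => γ * H x) (hu.const_mul α⁻¹)
    (hv.const_mul β⁻¹) (hH.const_mul γ) (fun x => mul_nonneg (by positivity) (hu0 x))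
    (fun x => mul_nonneg (by positivity) (hv0 x)) (fun x => mul_nonneg hγ0.le (hH0 x)) lu lv
    (fun a b => by
      rw [mul_pow, hγ]
      have := mul_le_mul_of_nonneg_left (h a b) (show 0 ≤ α⁻¹ * β⁻¹ by positivity)
      linarith)
  have pull : ∀ (c : ℝ) (f : ℝ → ℝ), 0 ≤ c → Measurable f →
      ∫⁻ x, ENNReal.ofReal (c * f x) = ENNReal.ofReal c * ∫⁻ x, ENNReal.ofReal (f x) :=
    fun c f hc hf => by
      simp_rw [ENNReal.ofReal_mul hc]
      exact lintegral_const_mul _ hf.ennreal_ofReal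
  rw [pull _ _ (by positivity) hu, pull _ _ (by positivity) hv, pull _ _ hγ0.le hH] at main
  set x := ∫⁻ x, ENNReal.ofReal (u x)
  set y := ∫⁻ x, ENNReal.ofReal (v x)
  set z := ∫⁻ x, ENNReal.ofReal (H x)
  have h4 := (ENNReal.four_mul_le_add_sq (ENNReal.ofReal α⁻¹ * x) (ENNReal.ofReal β⁻¹ * y)).trans
    (pow_le_pow_left₀ (by positivity) main 2)
  have e1 : 4 * (ENNReal.ofReal α⁻¹ * x * (ENNReal.ofReal β⁻¹ * y))
      = (4 * ENNReal.ofReal (γ ^ 2)) * (x * y) := by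
    rw [hγ, ENNReal.ofReal_mul (by positivity)]; ring
  have e2 : (2 * (ENNReal.ofReal γ * z)) ^ 2 = (4 * ENNReal.ofReal (γ ^ 2)) * z ^ 2 := by
    rw [ENNReal.ofReal_pow hγ0.le]; ring
  rw [e1, e2] at h4
  refine (ENNReal.mul_le_mul_iff_right ?_ ?_).1 h4
  · simp [hγ0.ne']
  · exact ENNReal.mul_ne_top (by simp) (by simp)

/-- The one-dimensional Prékopa–Leindler inequality for midpoints. -/
theorem lintegral_mul_lintegral_le_of_midpoint {U V : ℝ → ℝ≥0∞} {H : ℝ → ℝ} (hU : Measurable U)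
    (hV : Measurable V) (hH : Measurable H) (hH0 : ∀ x, 0 ≤ H x)
    (h : ∀ a b, U a * V b ≤ ENNReal.ofReal (H ((a + b) / 2) ^ 2)) :
    (∫⁻ x, U x) * ∫⁻ x, V x ≤ (∫⁻ x, ENNReal.ofReal (H x)) ^ 2 := by
  have trunc : ∀ f : ℝ → ℝ≥0∞, Measurable f →
      ∫⁻ x, f x = ⨆ n : ℕ, ∫⁻ x, min (f x) n := fun f hf => by
    rw [← lintegral_iSup (fun n => hf.min measurable_const)
      (fun m n hmn x => min_le_min_left _ (by exact_mod_cast hmn))]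
    refine lintegral_congr fun x => ?_
    rw [← inf_iSup_eq, ENNReal.iSup_natCast, inf_top_eq]
  rw [trunc U hU, trunc V hV, ENNReal.iSup_mul]
  refine iSup_le fun n => ?_
  rw [ENNReal.mul_iSup]
  refine iSup_le fun m => ?_
  have fin : ∀ (a : ℝ≥0∞) (n : ℕ), min a n ≠ ⊤ := fun a n =>
    ne_top_of_le_ne_top (ENNReal.natCast_ne_top n) (min_le_right _ _)
  have bdd : ∀ (f : ℝ → ℝ≥0∞) (n : ℕ), BddAbove (range fun x => (min (f x) n).toReal) :=
    fun f n => ⟨n, by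
      rintro _ ⟨x, rfl⟩
      exact ENNReal.toReal_le_of_le_ofReal (by positivity) (by simp)⟩
  have := lintegral_mul_lintegral_le_of_bounded (u := fun x => (min (U x) n).toReal)
    (v := fun x => (min (V x) m).toReal) (hU.min measurable_const).ennreal_toReal
    (hV.min measurable_const).ennreal_toReal hH (fun _ => ENNReal.toReal_nonneg)
    (fun _ => ENNReal.toReal_nonneg) hH0 (bdd U n) (bdd V m) (fun a b => by
      rw [← ENNReal.toReal_mul]
      refine ENNReal.toReal_le_of_le_ofReal (by positivity) (le_trans ?_ (h a b))
      exact mul_le_mul' (min_le_left _ _) (min_le_left _ _))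
  simpa only [ENNReal.ofReal_toReal (fin _ _)] using this

theorem setLIntegral_Ioi_zero_eq_lintegral_exp (f : ℝ → ℝ≥0∞) :
    ∫⁻ s in Ioi (0 : ℝ), f s = ∫⁻ a, ENNReal.ofReal (Real.exp a) * f (Real.exp a) := by
  have := lintegral_image_eq_lintegral_abs_deriv_mul (s := univ) MeasurableSet.univ
    (fun x _ => (Real.hasDerivAt_exp x).hasDerivWithinAt) Real.exp_injective.injOn f
  rw [image_univ, Real.range_exp] at this
  simpa using this

theorem setLIntegral_Ioi_mul_setLIntegral_Ioi_le {u v : ℝ → ℝ≥0∞} {K : ℝ} (hu : Measurable u)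
    (hv : Measurable v) (hK : 0 ≤ K)
    (h : ∀ s t, 0 < s → 0 < t → u s * v t ≤ ENNReal.ofReal (K * Real.exp (-(s * t)))) :
    (∫⁻ s in Ioi (0 : ℝ), u s) * ∫⁻ t in Ioi (0 : ℝ), v t
      ≤ ENNReal.ofReal (K * (Real.pi / 2)) := by
  let H : ℝ → ℝ := fun c => Real.exp c * (√K * Real.exp (-(1 / 2) * Real.exp c ^ 2))
  have hH : ∫⁻ c, ENNReal.ofReal (H c) = ENNReal.ofReal (√K * (√(Real.pi / (1 / 2)) / 2)) := by
    have hint : IntegrableOn (fun r : ℝ => Real.exp (-(1 / 2) * r ^ 2)) (Ioi 0) :=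
      (integrable_exp_neg_mul_sq (by norm_num)).integrableOn
    rw [← integral_gaussian_Ioi, ← integral_const_mul,
      ofReal_integral_eq_lintegral_ofReal (hint.const_mul _) (ae_of_all _ fun r => by positivity),
      setLIntegral_Ioi_zero_eq_lintegral_exp]
    refine lintegral_congr fun c => ?_
    rw [← ENNReal.ofReal_mul (by positivity)]
  rw [setLIntegral_Ioi_zero_eq_lintegral_exp, setLIntegral_Ioi_zero_eq_lintegral_exp]
  refine (lintegral_mul_lintegral_le_of_midpoint (H := H) (by fun_prop) (by fun_prop)
    (by fun_prop) (fun x => by positivity) fun a b => ?_).trans ?_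
  · calc _ = ENNReal.ofReal (Real.exp a * Real.exp b) * (u (Real.exp a) * v (Real.exp b)) := by
          rw [ENNReal.ofReal_mul (by positivity)]; ring
      _ ≤ ENNReal.ofReal (Real.exp a * Real.exp b)
          * ENNReal.ofReal (K * Real.exp (-(Real.exp a * Real.exp b))) := by
          gcongr
          exact h _ _ (Real.exp_pos a) (Real.exp_pos b)
      _ = _ := by
          rw [← ENNReal.ofReal_mul (by positivity)]
          congr 1
          have e : Real.exp ((a + b) / 2) ^ 2 = Real.exp a * Real.exp b := by
            rw [← Real.exp_nat_mul, ← Real.exp_add]; congr 1; push_cast; ring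
          simp only [H, mul_pow, e, Real.sq_sqrt hK]
          rw [← Real.exp_nat_mul (-(1 / 2) * _)]
          push_cast
          ring_nf
  · rw [hH, ← ENNReal.ofReal_pow (by positivity)]
    refine ENNReal.ofReal_le_ofReal (le_of_eq ?_)
    rw [mul_pow, Real.sq_sqrt hK, div_pow, Real.sq_sqrt (by positivity)]
    ring

theorem exists_measure_Ioi_eq_half (ρ : Measure ℝ) [IsFiniteMeasure ρ] [NullSingletonClass ρ] :
    ∃ c, ρ (Ioi c) = ρ univ / 2 ∧ ρ (Iio c) = ρ univ / 2 := by
  have hcont : Continuous fun c => ρ.real (Iic c) := by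
    have e : (fun c => ρ.real (Iic c)) = fun c => ∫ x, (Iic c).indicator (1 : ℝ → ℝ) x ∂ρ := by
      ext c
      rw [integral_indicator_one measurableSet_Iic]
    rw [e, continuous_iff_continuousAt]
    intro c
    refine continuousAt_of_dominated (bound := fun _ => 1) ?_ ?_ (integrable_const _) ?_
    · exact .of_forall fun t => (measurable_one.indicator measurableSet_Iic).aestronglyMeasurable
    · refine .of_forall fun t => .of_forall fun x => ?_
      by_cases h : x ∈ Iic t <;> simp [h]
    · have : ∀ᵐ x ∂ρ, x ≠ c := by
        rw [ae_iff]; simp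
      filter_upwards [this] with x hx
      rcases lt_or_gt_of_ne hx with h | h
      · refine (continuousAt_const (y := (1 : ℝ))).congr ?_
        filter_upwards [lt_mem_nhds h] with t ht
        simp [ht.le]
      · refine (continuousAt_const (y := (0 : ℝ))).congr ?_
        filter_upwards [gt_mem_nhds h] with t ht
        simp [ht]
  rcases eq_or_ne ρ 0 with rfl | hρ
  · exact ⟨0, by simp⟩
  have hM : 0 < ρ.real univ := by
    have : NeZero ρ := ⟨hρ⟩
    exact measureReal_univ_pos
  have hbot : Filter.Tendsto (fun c => ρ.real (Iic c)) .atBot (nhds 0) := by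
    have := tendsto_measure_iInter_atBot (μ := ρ) (s := fun c : ℝ => Iic c)
      (fun i => measurableSet_Iic.nullMeasurableSet) (fun a b h => Iic_subset_Iic.2 h)
      ⟨0, measure_ne_top _ _⟩
    rw [iInter_Iic_eq_empty_iff.2 (by rw [range_id']; exact not_bddBelow_univ), measure_empty] at this
    exact (ENNReal.tendsto_toReal (by simp)).comp this
  have htop : Filter.Tendsto (fun c => ρ.real (Iic c)) .atTop (nhds (ρ.real univ)) := by
    have := tendsto_measure_iUnion_atTop (μ := ρ) (s := fun c : ℝ => Iic c)
      (fun a b h => Iic_subset_Iic.2 h)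
    rw [iUnion_Iic] at this
    exact (ENNReal.tendsto_toReal (by simp)).comp this
  obtain ⟨a, ha⟩ := (hbot.eventually_lt_const (half_pos hM)).exists
  obtain ⟨b, hb⟩ := (htop.eventually_const_lt (half_lt_self hM)).exists
  obtain ⟨c, hc⟩ := mem_range_of_exists_le_of_exists_ge hcont ⟨a, ha.le⟩ ⟨b, hb.le⟩
  have h1 : ρ.real (Ioi c) = ρ.real univ / 2 := by
    have := measureReal_compl (μ := ρ) (measurableSet_Iic (a := c))
    rw [compl_Iic] at this
    simp only at hc
    linarith
  have conv : ∀ S : Set ℝ, ρ.real S = ρ.real univ / 2 → ρ S = ρ univ / 2 := fun S hS => by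
    rw [← ENNReal.ofReal_toReal (measure_ne_top ρ S), ← measureReal_def, hS,
      ENNReal.ofReal_div_of_pos two_pos, measureReal_def, ENNReal.ofReal_toReal (measure_ne_top _ _)]
    simp
  refine ⟨c, conv _ h1, ?_⟩
  rw [measure_congr Iio_ae_eq_Iic]
  exact conv _ hc

theorem lintegral_eq_Ioi_add_Ioi_neg (h : ℝ → ℝ≥0∞) :
    ∫⁻ t, h t = (∫⁻ t in Ioi (0 : ℝ), h t) + ∫⁻ t in Ioi (0 : ℝ), h (-t) := by
  rw [← lintegral_add_compl h (measurableSet_Ioi (a := (0 : ℝ))), compl_Ioi]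
  congr 1
  rw [← setLIntegral_congr Iio_ae_eq_Iic, ← lintegral_indicator measurableSet_Iio,
    ← lintegral_indicator measurableSet_Ioi, ← lintegral_neg_eq_self]
  refine lintegral_congr fun t => ?_
  by_cases ht : 0 < t <;> simp [ht]

/-- All exponential moments of `f` are finite. -/
def HasExpMoments {n : ℕ} (f : (Fin n → ℝ) → ℝ≥0∞) : Prop :=
  ∀ z, ∫⁻ x, ENNReal.ofReal (Real.exp (z ⬝ᵥ x)) * f x ≠ ⊤

/-- Functional Blaschke–Santaló inequality in dimension `n` for pairs of functions the first of
which has its barycenter at the origin. -/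
def SantaloCentered (n : ℕ) : Prop :=
  ∀ (f g : (Fin n → ℝ) → ℝ≥0∞) (K : ℝ), Measurable f → Measurable g → HasExpMoments f →
    HasExpMoments g → 0 ≤ K →
    (∀ x y, f x * g y ≤ ENNReal.ofReal (K * Real.exp (-(x ⬝ᵥ y)))) →
    (∀ z, ∫ x, z ⬝ᵥ x ∂(volume.withDensity f) = 0) →
    (∫⁻ x, f x) * ∫⁻ y, g y ≤ ENNReal.ofReal (K * (2 * Real.pi) ^ n)

@[fun_prop]
theorem Measurable.dotProduct_pi {α : Type*} [MeasurableSpace α] {n : ℕ} {u v : α → Fin n → ℝ}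
    (hu : Measurable u) (hv : Measurable v) : Measurable fun a => u a ⬝ᵥ v a := by
  unfold dotProduct
  fun_prop

section Slices

variable {n : ℕ} (c : ℝ) (z w : Fin n → ℝ)

/-- Projection along `(1, w)` of the restriction of `f` to the half space
`{p | 0 < ε * (p.1 - c)}`. -/
noncomputable def halfProjection (f : ℝ × (Fin n → ℝ) → ℝ≥0∞) (ε : ℝ) (x : Fin n → ℝ) : ℝ≥0∞ :=
  ∫⁻ s in Ioi (0 : ℝ), f (c + ε * s, x + z + (ε * s) • w)

/-- The shear dual to the one in `halfProjection`, with the exponential weight dual to the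
translation by `(c, z)`, integrated over half lines. -/
noncomputable def dualHalfProjection (g : ℝ × (Fin n → ℝ) → ℝ≥0∞) (ε : ℝ) (y : Fin n → ℝ) :
    ℝ≥0∞ :=
  ∫⁻ t in Ioi (0 : ℝ), ENNReal.ofReal (Real.exp (c * (ε * t - w ⬝ᵥ y) + z ⬝ᵥ y)) *
    g (ε * t - w ⬝ᵥ y, y)

variable {f g : ℝ × (Fin n → ℝ) → ℝ≥0∞}

theorem measurable_halfProjection (hf : Measurable f) (ε : ℝ) :
    Measurable (halfProjection c z w f ε) := by
  unfold halfProjection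
  exact Measurable.lintegral_prod_right' (f := fun p : (Fin n → ℝ) × ℝ =>
    f (c + ε * p.2, p.1 + z + (ε * p.2) • w)) (hf.comp (by fun_prop))

theorem measurable_dualHalfProjection (hg : Measurable g) (ε : ℝ) :
    Measurable (dualHalfProjection c z w g ε) := by
  unfold dualHalfProjection
  refine Measurable.lintegral_prod_right' (f := fun p : (Fin n → ℝ) × ℝ =>
    ENNReal.ofReal (Real.exp (c * (ε * p.2 - w ⬝ᵥ p.1) + z ⬝ᵥ p.1)) *
    g (ε * p.2 - w ⬝ᵥ p.1, p.1)) (Measurable.mul (by fun_prop) (hg.comp (by fun_prop)))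

theorem halfProjection_mul_dualHalfProjection_le (hf : Measurable f) (hg : Measurable g) {K : ℝ}
    (hK : 0 ≤ K)
    (h : ∀ p q, f p * g q ≤ ENNReal.ofReal (K * Real.exp (-(p.1 * q.1 + p.2 ⬝ᵥ q.2))))
    {ε : ℝ} (hε : ε * ε = 1) (x y : Fin n → ℝ) :
    halfProjection c z w f ε x * dualHalfProjection c z w g ε y
      ≤ ENNReal.ofReal (K * (Real.pi / 2) * Real.exp (-(x ⬝ᵥ y))) := by
  unfold halfProjection dualHalfProjection
  rw [show K * (Real.pi / 2) * Real.exp (-(x ⬝ᵥ y)) = K * Real.exp (-(x ⬝ᵥ y)) * (Real.pi / 2) by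
    ring]
  refine setLIntegral_Ioi_mul_setLIntegral_Ioi_le (hf.comp (by fun_prop))
    (Measurable.mul (by fun_prop) (hg.comp (by fun_prop))) (by positivity) fun s t _ _ => ?_
  rw [mul_left_comm]
  refine (mul_le_mul_right (h _ _) _).trans ?_
  rw [← ENNReal.ofReal_mul (by positivity)]
  refine ENNReal.ofReal_le_ofReal (le_of_eq ?_)
  simp only [add_dotProduct, smul_dotProduct, smul_eq_mul]
  rw [mul_left_comm, mul_assoc K, ← Real.exp_add, ← Real.exp_add]
  congr 2
  linear_combination (-(s * t)) * hε

theorem lintegral_comp_mul_sub {ε : ℝ} (hε : ε * ε = 1) (h : ℝ → ℝ≥0∞) :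
    ∫⁻ r, h (ε * (r - c)) = ∫⁻ s, h s := by
  rcases mul_self_eq_one_iff.1 hε with rfl | rfl
  · simp only [one_mul]
    exact lintegral_sub_right_eq_self h c
  · simp only [neg_mul, one_mul]
    rw [lintegral_sub_right_eq_self (fun r => h (-r)) c, lintegral_neg_eq_self]

theorem lintegral_mul_halfProjection (hf : Measurable f) {ε : ℝ} (hε : ε * ε = 1)
    {φ : (Fin n → ℝ) → ℝ≥0∞} (hφ : Measurable φ) :
    ∫⁻ x, φ x * halfProjection c z w f ε x =
      ∫⁻ p in {p | 0 < ε * (p.1 - c)}, φ (p.2 - z - (p.1 - c) • w)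
        ∂((volume : Measure (ℝ × (Fin n → ℝ))).withDensity f) := by
  have hS : MeasurableSet {p : ℝ × (Fin n → ℝ) | 0 < ε * (p.1 - c)} :=
    measurableSet_lt measurable_const (by fun_prop)
  have hφ' : Measurable fun p : ℝ × (Fin n → ℝ) => φ (p.2 - z - (p.1 - c) • w) :=
    hφ.comp (by fun_prop)
  rw [← lintegral_indicator hS, lintegral_withDensity_eq_lintegral_mul _ hf (hφ'.indicator hS),
    Measure.volume_eq_prod, lintegral_prod _ (hf.mul (hφ'.indicator hS)).aemeasurable]
  simp only [halfProjection]
  have e1 : ∀ x, φ x * ∫⁻ s in Ioi (0 : ℝ), f (c + ε * s, x + z + (ε * s) • w) =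
      ∫⁻ s in Ioi (0 : ℝ), φ x * f (c + ε * s, x + z + (ε * s) • w) := fun x =>
    (lintegral_const_mul _ (hf.comp (by fun_prop))).symm
  simp_rw [e1]
  have hmeas : Measurable (Function.uncurry fun (x : Fin n → ℝ) (s : ℝ) =>
      φ x * f (c + ε * s, x + z + (ε * s) • w)) := by
    unfold Function.uncurry
    exact Measurable.mul (f := fun p : (Fin n → ℝ) × ℝ => φ p.1) (hφ.comp measurable_fst)
      (hf.comp (by fun_prop))
  rw [lintegral_lintegral_swap hmeas.aemeasurable, ← lintegral_indicator measurableSet_Ioi,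
    ← lintegral_comp_mul_sub c hε]
  refine lintegral_congr fun r => ?_
  have hr' : ε * (ε * (r - c)) = r - c := by linear_combination (r - c) * hε
  by_cases hpos : 0 < ε * (r - c)
  · simp only [indicator, mem_Ioi, hpos, if_true, hr', Pi.mul_apply, mem_ofPred_eq, add_sub_cancel]
    rw [← lintegral_add_right_eq_self (fun x => f (r, x) * φ (x - z - (r - c) • w))
      (z + (r - c) • w)]
    refine lintegral_congr fun x => ?_
    rw [mul_comm]
    congr 2
    · congr 1; abel
    · abel
  · simp [indicator, hpos]

theorem lintegral_mul_dualHalfProjection_add (hg : Measurable g) {φ : (Fin n → ℝ) → ℝ≥0∞}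
    (hφ : Measurable φ) :
    (∫⁻ y, φ y * dualHalfProjection c z w g 1 y) +
      ∫⁻ y, φ y * dualHalfProjection c z w g (-1) y =
    ∫⁻ q : ℝ × (Fin n → ℝ), φ q.2 * (ENNReal.ofReal (Real.exp (c * q.1 + z ⬝ᵥ q.2)) * g q) := by
  have hmeas : Measurable fun q : ℝ × (Fin n → ℝ) =>
      φ q.2 * (ENNReal.ofReal (Real.exp (c * q.1 + z ⬝ᵥ q.2)) * g q) :=
    Measurable.mul (f := fun q : ℝ × (Fin n → ℝ) => φ q.2) (hφ.comp measurable_snd)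
      (Measurable.mul (by fun_prop) hg)
  have hG := measurable_dualHalfProjection c z w hg 1
  rw [← lintegral_add_left (by fun_prop), Measure.volume_eq_prod,
    lintegral_prod_symm _ hmeas.aemeasurable]
  refine lintegral_congr fun y => ?_
  have hmeas' : Measurable fun t => ENNReal.ofReal (Real.exp (c * t + z ⬝ᵥ y)) * g (t, y) :=
    Measurable.mul (by fun_prop) (hg.comp (by fun_prop))
  dsimp only
  rw [← mul_add, lintegral_const_mul _ hmeas']
  congr 1
  simp only [dualHalfProjection, one_mul, neg_one_mul]
  rw [← lintegral_eq_Ioi_add_Ioi_neg fun t =>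
    ENNReal.ofReal (Real.exp (c * (t - w ⬝ᵥ y) + z ⬝ᵥ y)) * g (t - w ⬝ᵥ y, y)]
  exact lintegral_sub_right_eq_self (fun t =>
    ENNReal.ofReal (Real.exp (c * t + z ⬝ᵥ y)) * g (t, y)) (w ⬝ᵥ y)

end Slices

theorem integrable_of_lintegral_exp_ne_top {α : Type*} [MeasurableSpace α] {m : Measure α}
    {ℓ : α → ℝ} (hℓ : Measurable ℓ) (h₁ : ∫⁻ x, ENNReal.ofReal (Real.exp (ℓ x)) ∂m ≠ ⊤)
    (h₂ : ∫⁻ x, ENNReal.ofReal (Real.exp (-ℓ x)) ∂m ≠ ⊤) : Integrable ℓ m := by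
  have i1 : Integrable (fun x => Real.exp (ℓ x)) m :=
    (lintegral_ofReal_ne_top_iff_integrable (by fun_prop) (ae_of_all _ fun x => by positivity)).1 h₁
  have i2 : Integrable (fun x => Real.exp (-ℓ x)) m :=
    (lintegral_ofReal_ne_top_iff_integrable (by fun_prop) (ae_of_all _ fun x => by positivity)).1 h₂
  refine (i1.add i2).mono' hℓ.aestronglyMeasurable (ae_of_all _ fun x => ?_)
  have h1 := Real.add_one_le_exp (ℓ x)
  have h2 := Real.add_one_le_exp (-ℓ x)
  have h3 := Real.exp_pos (ℓ x)
  have h4 := Real.exp_pos (-ℓ x)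
  rw [Real.norm_eq_abs, Pi.add_apply]
  exact abs_le.2 ⟨by linarith, by linarith⟩

theorem setIntegral_pos_of_pos {α : Type*} [MeasurableSpace α] {m : Measure α} {S : Set α}
    {ℓ : α → ℝ} (hS : MeasurableSet S) (hi : IntegrableOn ℓ S m) (hpos : ∀ x ∈ S, 0 < ℓ x)
    (hm : m S ≠ 0) : 0 < ∫ x in S, ℓ x ∂m := by
  rw [integral_pos_iff_support_of_nonneg_ae
    ((ae_restrict_iff' hS).2 (ae_of_all _ fun x hx => (hpos x hx).le)) hi]
  refine (pos_iff_ne_zero.2 hm).trans_le ?_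
  rw [← Measure.restrict_apply_self]
  exact measure_mono fun x hx => (hpos x hx).ne'

theorem exists_sheared_barycenter_eq_zero {n : ℕ} {m : Measure (ℝ × (Fin n → ℝ))}
    [IsFiniteMeasure m] (hm : m ≠ 0) (h₁ : Integrable (fun p => p.1) m)
    (h₂ : ∀ i, Integrable (fun p => p.2 i) m) {c : ℝ}
    (hc : ∀ ε : ℝ, ε * ε = 1 → m {p | 0 < ε * (p.1 - c)} = m univ / 2) :
    ∃ z w : Fin n → ℝ, ∀ ε : ℝ, ε * ε = 1 → ∀ i,
      ∫ p in {p | 0 < ε * (p.1 - c)}, (p.2 - z - (p.1 - c) • w) i ∂m = 0 := by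
  have hMne : m univ / 2 ≠ 0 := by simpa using hm
  have hM : 0 < (m univ / 2).toReal :=
    ENNReal.toReal_pos hMne (ENNReal.div_ne_top (measure_ne_top _ _) (by simp))
  let S : ℝ → Set (ℝ × (Fin n → ℝ)) := fun ε => {p | 0 < ε * (p.1 - c)}
  have hSm : ∀ ε, MeasurableSet (S ε) := fun ε => measurableSet_lt measurable_const (by fun_prop)
  have hi : Integrable (fun p : ℝ × (Fin n → ℝ) => p.1 - c) m := h₁.sub (integrable_const c)
  let a : ℝ → ℝ := fun ε => ∫ p in S ε, (p.1 - c) ∂m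
  let B : ℝ → Fin n → ℝ := fun ε i => ∫ p in S ε, p.2 i ∂m
  have ha : ∀ ε, ε * ε = 1 → 0 < ε * a ε := fun ε hε => by
    have := setIntegral_pos_of_pos (m := m) (hSm ε) (hi.const_mul ε).integrableOn (fun p hp => hp)
      (by rw [hc ε hε]; exact hMne)
    rwa [integral_const_mul] at this
  have hap : 0 < a 1 := by simpa using ha 1 (by norm_num)
  have han : a (-1) < 0 := by simpa using ha (-1) (by norm_num)
  set M := (m univ / 2).toReal
  let w : Fin n → ℝ := fun i => (B 1 i - B (-1) i) / (a 1 - a (-1))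
  let z : Fin n → ℝ := fun i => (B 1 i - a 1 * w i) / M
  have hwa : ∀ i, w i * (a 1 - a (-1)) = B 1 i - B (-1) i := fun i =>
    div_mul_cancel₀ _ (by linarith)
  have hza : ∀ i, z i * M = B 1 i - a 1 * w i := fun i => div_mul_cancel₀ _ hM.ne'
  refine ⟨z, w, fun ε hε i => ?_⟩
  have hcalc : ∫ p in S ε, (p.2 - z - (p.1 - c) • w) i ∂m = B ε i - z i * M - a ε * w i := by
    simp only [Pi.sub_apply, Pi.smul_apply, smul_eq_mul]
    have h₃ : Integrable (fun p : ℝ × (Fin n → ℝ) => p.2 i - z i) m :=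
      (h₂ i).sub (integrable_const _)
    rw [integral_sub h₃.integrableOn (hi.mul_const _).integrableOn, integral_sub (h₂ i).integrableOn (integrable_const _),
      integral_mul_const, setIntegral_const, measureReal_def, hc ε hε, smul_eq_mul, mul_comm M]
  rw [hcalc]
  rcases mul_self_eq_one_iff.1 hε with rfl | rfl
  · linarith [hza i]
  · linarith [hza i, hwa i]

section Tilt

variable {n : ℕ} {f g : ℝ × (Fin n → ℝ) → ℝ≥0∞}

theorem exists_median_fst (hfin : ∫⁻ p, f p ≠ ⊤) :
    ∃ c : ℝ, ∀ ε : ℝ, ε * ε = 1 →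
      ((volume : Measure (ℝ × (Fin n → ℝ))).withDensity f) {p | 0 < ε * (p.1 - c)} =
        ((volume : Measure (ℝ × (Fin n → ℝ))).withDensity f) univ / 2 := by
  set m := (volume : Measure (ℝ × (Fin n → ℝ))).withDensity f with hm
  have : IsFiniteMeasure m := isFiniteMeasure_withDensity hfin
  have : NullSingletonClass (m.map Prod.fst) := ⟨fun x => by
    rw [Measure.map_apply measurable_fst (measurableSet_singleton x)]
    refine withDensity_absolutelyContinuous _ _ ?_
    have : (Prod.fst ⁻¹' {x} : Set (ℝ × (Fin n → ℝ))) = {x} ×ˢ univ := by ext; simp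
    rw [this, Measure.volume_eq_prod, Measure.prod_prod]
    simp⟩
  obtain ⟨c, h1, h2⟩ := exists_measure_Ioi_eq_half (m.map Prod.fst)
  rw [Measure.map_apply measurable_fst measurableSet_Ioi,
    Measure.map_apply measurable_fst MeasurableSet.univ, preimage_univ] at h1
  rw [Measure.map_apply measurable_fst measurableSet_Iio,
    Measure.map_apply measurable_fst MeasurableSet.univ, preimage_univ] at h2
  refine ⟨c, fun ε hε => ?_⟩
  rcases mul_self_eq_one_iff.1 hε with rfl | rfl
  · rw [← h1]; congr 1; ext p; simp
  · rw [← h2]; congr 1; ext p; simp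

theorem SantaloCentered.exists_tilt_prod (hS : SantaloCentered n) (hf : Measurable f)
    (hg : Measurable g)
    (hfm : ∀ (a : ℝ) (z : Fin n → ℝ), ∫⁻ p : ℝ × (Fin n → ℝ),
      ENNReal.ofReal (Real.exp (a * p.1 + z ⬝ᵥ p.2)) * f p ≠ ⊤)
    (hgm : ∀ (a : ℝ) (z : Fin n → ℝ), ∫⁻ p : ℝ × (Fin n → ℝ),
      ENNReal.ofReal (Real.exp (a * p.1 + z ⬝ᵥ p.2)) * g p ≠ ⊤) {K : ℝ} (hK : 0 ≤ K)
    (h : ∀ p q, f p * g q ≤ ENNReal.ofReal (K * Real.exp (-(p.1 * q.1 + p.2 ⬝ᵥ q.2)))) :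
    ∃ (c : ℝ) (z : Fin n → ℝ), (∫⁻ p, f p) *
      ∫⁻ q : ℝ × (Fin n → ℝ), ENNReal.ofReal (Real.exp (c * q.1 + z ⬝ᵥ q.2)) * g q
        ≤ ENNReal.ofReal (K * (2 * Real.pi) ^ (n + 1)) := by
  have hfin : ∫⁻ p, f p ≠ ⊤ := by simpa using hfm 0 0
  obtain ⟨c, hc⟩ := exists_median_fst hfin
  set m := (volume : Measure (ℝ × (Fin n → ℝ))).withDensity f with hmdef
  have : IsFiniteMeasure m := isFiniteMeasure_withDensity hfin
  have hmuniv : m univ = ∫⁻ p, f p := by rw [hmdef, withDensity_apply _ MeasurableSet.univ]; simp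
  rcases eq_or_ne m 0 with hm0 | hm0
  · refine ⟨0, 0, ?_⟩
    rw [← hmuniv, hm0]
    simp
  have hmexp : ∀ (a : ℝ) (z : Fin n → ℝ),
      ∫⁻ p, ENNReal.ofReal (Real.exp (a * p.1 + z ⬝ᵥ p.2)) ∂m ≠ ⊤ := fun a z => by
    rw [hmdef, lintegral_withDensity_eq_lintegral_mul _ hf (by fun_prop)]
    simpa only [Pi.mul_apply, mul_comm] using hfm a z
  have hlin : ∀ (a : ℝ) (z : Fin n → ℝ),
      Integrable (fun p : ℝ × (Fin n → ℝ) => a * p.1 + z ⬝ᵥ p.2) m := fun a z => by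
    refine integrable_of_lintegral_exp_ne_top (by fun_prop) (hmexp a z) ?_
    convert hmexp (-a) (-z) using 5
    simp; ring
  obtain ⟨z, w, hzw⟩ := exists_sheared_barycenter_eq_zero hm0 (by simpa using hlin 1 0)
    (fun i => by simpa using hlin 0 (Pi.single i 1)) hc
  have hT : Measurable fun p : ℝ × (Fin n → ℝ) => p.2 - z - (p.1 - c) • w := by fun_prop
  have hTi : ∀ i, Integrable (fun p : ℝ × (Fin n → ℝ) => (p.2 - z - (p.1 - c) • w) i) m :=
    fun i => by
      refine ((hlin (-(w i)) (Pi.single i 1)).add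
        (integrable_const (-z i + c * w i))).congr (ae_of_all _ fun p => ?_)
      simp
      ring
  let F := halfProjection c z w f
  let G := dualHalfProjection c z w g
  have hFmap : ∀ ε : ℝ, ε * ε = 1 → volume.withDensity (F ε) =
      (m.restrict {p | 0 < ε * (p.1 - c)}).map fun p => p.2 - z - (p.1 - c) • w := fun ε hε => by
    refine Measure.ext_of_lintegral _ fun φ hφ => ?_
    rw [lintegral_map hφ hT, lintegral_withDensity_eq_lintegral_mul _
      (measurable_halfProjection c z w hf ε) hφ, ← lintegral_mul_halfProjection c z w hf hε hφ]
    simp [mul_comm]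
  have hFm : ∀ ε : ℝ, ε * ε = 1 → HasExpMoments (F ε) := fun ε hε v => by
    have := lintegral_mul_halfProjection c z w hf hε
      (φ := fun x => ENNReal.ofReal (Real.exp (v ⬝ᵥ x))) (by fun_prop)
    rw [this]
    refine ne_top_of_le_ne_top ?_ (lintegral_mono' Measure.restrict_le_self le_rfl)
    have e : ∀ p : ℝ × (Fin n → ℝ),
        ENNReal.ofReal (Real.exp (v ⬝ᵥ (p.2 - z - (p.1 - c) • w))) =
        ENNReal.ofReal (Real.exp (-(v ⬝ᵥ z) + c * v ⬝ᵥ w)) *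
          ENNReal.ofReal (Real.exp (-(v ⬝ᵥ w) * p.1 + v ⬝ᵥ p.2)) := fun p => by
      rw [← ENNReal.ofReal_mul (by positivity), ← Real.exp_add]
      congr 2
      simp only [dotProduct_sub, dotProduct_smul, smul_eq_mul]
      ring
    simp_rw [e]
    rw [lintegral_const_mul _ (by fun_prop)]
    exact ENNReal.mul_ne_top (by simp) (hmexp _ _)
  have hGsum : ∀ φ : (Fin n → ℝ) → ℝ≥0∞, Measurable φ → (∫⁻ y, φ y * G 1 y) + ∫⁻ y, φ y * G (-1) y
      = ∫⁻ q : ℝ × (Fin n → ℝ), φ q.2 * (ENNReal.ofReal (Real.exp (c * q.1 + z ⬝ᵥ q.2)) * g q) :=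
    fun φ hφ => lintegral_mul_dualHalfProjection_add c z w hg hφ
  have hGm : ∀ ε : ℝ, ε * ε = 1 → HasExpMoments (G ε) := fun ε hε v => by
    have := hGsum (fun x => ENNReal.ofReal (Real.exp (v ⬝ᵥ x))) (by fun_prop)
    have fin : ∫⁻ q : ℝ × (Fin n → ℝ), ENNReal.ofReal (Real.exp (v ⬝ᵥ q.2)) *
        (ENNReal.ofReal (Real.exp (c * q.1 + z ⬝ᵥ q.2)) * g q) ≠ ⊤ := by
      convert hgm c (v + z) using 2
      ext q
      rw [← mul_assoc, ← ENNReal.ofReal_mul (by positivity), ← Real.exp_add, add_dotProduct]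
      congr 3
      ring
    rw [← this] at fin
    rcases mul_self_eq_one_iff.1 hε with rfl | rfl
    · exact (ENNReal.add_ne_top.1 fin).1
    · exact (ENNReal.add_ne_top.1 fin).2
  have hbary : ∀ ε : ℝ, ε * ε = 1 → ∀ v, ∫ x, v ⬝ᵥ x ∂(volume.withDensity (F ε)) = 0 :=
    fun ε hε v => by
      rw [hFmap ε hε, integral_map hT.aemeasurable
        (Measurable.aestronglyMeasurable (by fun_prop))]
      unfold dotProduct
      rw [integral_finsetSum _ fun i _ => ((hTi i).const_mul (v i)).integrableOn]
      refine Finset.sum_eq_zero fun i _ => ?_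
      rw [integral_const_mul, hzw ε hε i, mul_zero]
  have hmass : ∀ ε : ℝ, ε * ε = 1 → ∫⁻ x, F ε x = (∫⁻ p, f p) / 2 := fun ε hε => by
    have := lintegral_mul_halfProjection c z w hf hε (φ := fun _ => 1) measurable_const
    simp only [one_mul, setLIntegral_one] at this
    rw [← hmuniv, ← hc ε hε, ← this]
  have hsant : ∀ ε : ℝ, ε * ε = 1 → (∫⁻ p, f p) / 2 * ∫⁻ y, G ε y ≤
      ENNReal.ofReal (K * (Real.pi / 2) * (2 * Real.pi) ^ n) := fun ε hε => by
    rw [← hmass ε hε]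
    exact hS _ _ _ (measurable_halfProjection c z w hf ε) (measurable_dualHalfProjection c z w hg ε)
      (hFm ε hε) (hGm ε hε) (by positivity)
      (halfProjection_mul_dualHalfProjection_le c z w hf hg hK h hε) (hbary ε hε)
  refine ⟨c, z, ?_⟩
  have hsum := hGsum (fun _ => 1) measurable_const
  simp only [one_mul] at hsum
  rw [← hsum]
  set I := ∫⁻ p, f p
  have hI : I = 2 * (I / 2) := by
    rw [ENNReal.mul_div_cancel (by simp) (by simp)]
  rw [hI, mul_assoc, mul_add]
  calc _ ≤ 2 * (ENNReal.ofReal (K * (Real.pi / 2) * (2 * Real.pi) ^ n) +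
        ENNReal.ofReal (K * (Real.pi / 2) * (2 * Real.pi) ^ n)) := by
        gcongr
        · exact hsant 1 (by norm_num)
        · exact hsant (-1) (by norm_num)
    _ = ENNReal.ofReal (K * (2 * Real.pi) ^ (n + 1)) := by
        rw [← ENNReal.ofReal_add (by positivity) (by positivity),
          show (2 : ℝ≥0∞) = ENNReal.ofReal 2 by simp, ← ENNReal.ofReal_mul (by norm_num)]
        congr 1
        ring

end Tilt

theorem lintegral_fin_succ {n : ℕ} (F : (Fin (n + 1) → ℝ) → ℝ≥0∞) :
    ∫⁻ x, F x = ∫⁻ p : ℝ × (Fin n → ℝ), F (Fin.cons p.1 p.2) := by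
  rw [← (volume_preserving_piFinSuccAbove (fun _ : Fin (n + 1) => ℝ) 0).symm.lintegral_comp_emb
    (MeasurableEquiv.measurableEmbedding _)]
  refine lintegral_congr fun p => ?_
  congr 1
  simp [MeasurableEquiv.piFinSuccAbove]
  rfl

theorem Fin.cons_dotProduct_cons {n : ℕ} (a b : ℝ) (x y : Fin n → ℝ) :
    (Fin.cons a x : Fin (n + 1) → ℝ) ⬝ᵥ Fin.cons b y = a * b + x ⬝ᵥ y := by
  simp [dotProduct, Fin.sum_univ_succ]

theorem measurable_fin_cons {n : ℕ} :
    Measurable fun p : ℝ × (Fin n → ℝ) => (Fin.cons p.1 p.2 : Fin (n + 1) → ℝ) := by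
  refine measurable_pi_iff.2 (Fin.cases ?_ fun i => ?_)
  · simpa using measurable_fst
  · simp only [Fin.cons_succ]
    fun_prop

theorem SantaloCentered.exists_tilt {n : ℕ} (hS : SantaloCentered n)
    {f g : (Fin (n + 1) → ℝ) → ℝ≥0∞} (hf : Measurable f) (hg : Measurable g)
    (hfm : HasExpMoments f) (hgm : HasExpMoments g) {K : ℝ} (hK : 0 ≤ K)
    (h : ∀ x y, f x * g y ≤ ENNReal.ofReal (K * Real.exp (-(x ⬝ᵥ y)))) :
    ∃ z : Fin (n + 1) → ℝ, (∫⁻ x, f x) * ∫⁻ y, ENNReal.ofReal (Real.exp (z ⬝ᵥ y)) * g y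
      ≤ ENNReal.ofReal (K * (2 * Real.pi) ^ (n + 1)) := by
  have mom : ∀ f : (Fin (n + 1) → ℝ) → ℝ≥0∞, HasExpMoments f → ∀ (a : ℝ) (z : Fin n → ℝ),
      ∫⁻ p : ℝ × (Fin n → ℝ), ENNReal.ofReal (Real.exp (a * p.1 + z ⬝ᵥ p.2)) *
        f (Fin.cons p.1 p.2) ≠ ⊤ := fun f hf a z => by
    have := hf (Fin.cons a z)
    rw [lintegral_fin_succ] at this
    simpa only [Fin.cons_dotProduct_cons] using this
  obtain ⟨c, z, hcz⟩ := hS.exists_tilt_prod (f := fun p => f (Fin.cons p.1 p.2))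
    (g := fun p => g (Fin.cons p.1 p.2)) (hf.comp measurable_fin_cons) (hg.comp measurable_fin_cons) (mom f hfm) (mom g hgm) hK (fun p q => by
      simpa only [Fin.cons_dotProduct_cons] using h (Fin.cons p.1 p.2) (Fin.cons q.1 q.2))
  refine ⟨Fin.cons c z, ?_⟩
  rw [lintegral_fin_succ, lintegral_fin_succ]
  simpa only [Fin.cons_dotProduct_cons] using hcz

theorem lintegral_le_lintegral_exp_mul {n : ℕ} {f : (Fin n → ℝ) → ℝ≥0∞} (hf : Measurable f)
    (hfm : HasExpMoments f) (hb : ∀ z, ∫ x, z ⬝ᵥ x ∂(volume.withDensity f) = 0) (z : Fin n → ℝ) :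
    ∫⁻ x, f x ≤ ∫⁻ x, ENNReal.ofReal (Real.exp (z ⬝ᵥ x)) * f x := by
  have hfin : ∫⁻ x, f x ≠ ⊤ := by simpa using hfm 0
  set m := (volume : Measure (Fin n → ℝ)).withDensity f with hmdef
  have : IsFiniteMeasure m := isFiniteMeasure_withDensity hfin
  have hm : ∀ z, ∫⁻ x, ENNReal.ofReal (Real.exp (z ⬝ᵥ x)) ∂m =
      ∫⁻ x, ENNReal.ofReal (Real.exp (z ⬝ᵥ x)) * f x := fun z => by
    rw [hmdef, lintegral_withDensity_eq_lintegral_mul _ hf (by fun_prop)]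
    simp [mul_comm]
  have hexp : ∫⁻ x, ENNReal.ofReal (Real.exp (z ⬝ᵥ x)) ∂m ≠ ⊤ := by rw [hm]; exact hfm z
  have hi : Integrable (fun x => z ⬝ᵥ x) m :=
    integrable_of_lintegral_exp_ne_top (by fun_prop) hexp (by
      have := hfm (-z)
      rw [← hm] at this
      simpa using this)
  have hei : Integrable (fun x => Real.exp (z ⬝ᵥ x)) m :=
    (lintegral_ofReal_ne_top_iff_integrable (by fun_prop)
      (ae_of_all _ fun x => by positivity)).1 hexp
  have hle : m.real univ ≤ ∫ x, Real.exp (z ⬝ᵥ x) ∂m := by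
    have := integral_mono (hi.add (integrable_const 1)) hei fun x => Real.add_one_le_exp (z ⬝ᵥ x)
    rw [integral_add' hi (integrable_const _), hb z] at this
    simpa using this
  calc ∫⁻ x, f x = m univ := by rw [hmdef, withDensity_apply _ MeasurableSet.univ]; simp
    _ = ENNReal.ofReal (m.real univ) := by simp
    _ ≤ ENNReal.ofReal (∫ x, Real.exp (z ⬝ᵥ x) ∂m) := ENNReal.ofReal_le_ofReal hle
    _ = _ := by
      rw [ofReal_integral_eq_lintegral_ofReal hei (ae_of_all _ fun x => by positivity), hm]

/-- Functional Blaschke–Santaló inequality. -/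
theorem santaloCentered (n : ℕ) : SantaloCentered n := by
  induction n with
  | zero =>
    intro f g K _ _ _ _ _ h _
    have hvol : (volume : Measure (Fin 0 → ℝ)) = Measure.dirac 0 := by
      rw [volume_pi, Measure.pi_of_empty _ 0]
    rw [hvol, lintegral_dirac, lintegral_dirac]
    simpa using h 0 0
  | succ n ih =>
    intro f g K hf hg hfm hgm hK h hb
    obtain ⟨z, hz⟩ := ih.exists_tilt hg hf hgm hfm hK fun x y => by
      rw [mul_comm, dotProduct_comm]; exact h y x
    rw [mul_comm]
    exact (mul_le_mul_right (lintegral_le_lintegral_exp_mul hf hfm hb z) _).trans hz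

theorem integral_add_integral_nonneg {α β : Type*} [MeasurableSpace α] [MeasurableSpace β]
    {μ : Measure α} {ν : Measure β} [IsProbabilityMeasure μ] [IsProbabilityMeasure ν]
    {f : α → ℝ} {g : β → ℝ} (hf : Integrable f μ) (hg : Integrable g ν)
    (h : ∀ x y, 0 ≤ f x + g y) : 0 ≤ ∫ x, f x ∂μ + ∫ y, g y ∂ν := by
  have h₁ : ∀ x, 0 ≤ f x + ∫ y, g y ∂ν := fun x => by
    have : 0 ≤ ∫ y, (f x + g y) ∂ν := integral_nonneg (h x)
    rwa [integral_add (integrable_const _) hg, integral_const, probReal_univ, one_smul] at this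
  have : 0 ≤ ∫ x, (f x + ∫ y, g y ∂ν) ∂μ := integral_nonneg h₁
  rwa [integral_add hf (integrable_const _), integral_const, probReal_univ, one_smul] at this

section DualPair

variable {E : Type*} [MeasurableSpace E] (μ ν : Measure E)

/-- Admissible pairs for the problem dual to optimal transport with gain `h`. -/
structure IsDualPair (h : E × E → ℝ) (f g : E → ℝ) : Prop where
  measurable_fst : Measurable f
  measurable_snd : Measurable g
  integrable_fst : Integrable f μ
  integrable_snd : Integrable g ν
  le_add : ∀ x y, h (x, y) ≤ f x + g y

/-- The value of the problem dual to optimal transport with gain `h`. -/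
noncomputable def dualValue (h : E × E → ℝ) : ℝ :=
  sInf {r | ∃ f g, IsDualPair μ ν h f g ∧ r = ∫ x, f x ∂μ + ∫ y, g y ∂ν}

variable {μ ν}

theorem IsDualPair.add {h₁ h₂ : E × E → ℝ} {f₁ g₁ f₂ g₂ : E → ℝ} (H₁ : IsDualPair μ ν h₁ f₁ g₁)
    (H₂ : IsDualPair μ ν h₂ f₂ g₂) :
    IsDualPair μ ν (h₁ + h₂) (fun x => f₁ x + f₂ x) fun y => g₁ y + g₂ y where
  measurable_fst := H₁.1.add H₂.1
  measurable_snd := H₁.2.add H₂.2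
  integrable_fst := H₁.3.add H₂.3
  integrable_snd := H₁.4.add H₂.4
  le_add x y := by
    have h1 := H₁.5 x y
    have h2 := H₂.5 x y
    simp only [Pi.add_apply]
    linarith

theorem IsDualPair.smul {h : E × E → ℝ} {f g : E → ℝ} (H : IsDualPair μ ν h f g) {c : ℝ}
    (hc : 0 ≤ c) : IsDualPair μ ν (c • h) (fun x => c * f x) fun y => c * g y where
  measurable_fst := H.1.const_mul c
  measurable_snd := H.2.const_mul c
  integrable_fst := H.3.const_mul c
  integrable_snd := H.4.const_mul c
  le_add x y := by
    rw [← mul_add]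
    exact mul_le_mul_of_nonneg_left (H.5 x y) hc

end DualPair

section Duality

variable {E : Type*} [NormedAddCommGroup E]

/-- Real functions on `E × E` growing at most quadratically. -/
def quadraticGrowth (E : Type*) [NormedAddCommGroup E] : Submodule ℝ (E × E → ℝ) where
  carrier := {h | ∃ C, ∀ p, |h p| ≤ C * ((1 + ‖p.1‖ ^ 2) + (1 + ‖p.2‖ ^ 2))}
  add_mem' := by
    rintro a b ⟨C, hC⟩ ⟨D, hD⟩
    exact ⟨C + D, fun p => (abs_add_le _ _).trans (by rw [add_mul]; exact add_le_add (hC p) (hD p))⟩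
  zero_mem' := ⟨0, by simp⟩
  smul_mem' := by
    rintro c a ⟨C, hC⟩
    refine ⟨|c| * C, fun p => ?_⟩
    rw [Pi.smul_apply, smul_eq_mul, abs_mul, mul_assoc]
    exact mul_le_mul_of_nonneg_left (hC p) (abs_nonneg c)

theorem mem_quadraticGrowth_of_abs_le {h k : E × E → ℝ} (hk : k ∈ quadraticGrowth E)
    (hle : ∀ p, |h p| ≤ |k p|) : h ∈ quadraticGrowth E := by
  obtain ⟨C, hC⟩ := hk
  exact ⟨C, fun p => (hle p).trans (hC p)⟩

theorem mem_quadraticGrowth_of_abs_le_const {h : E × E → ℝ} {C : ℝ} (hC : ∀ p, |h p| ≤ C) :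
    h ∈ quadraticGrowth E := by
  refine ⟨C, fun p => (hC p).trans ?_⟩
  have hC0 : 0 ≤ C := (abs_nonneg _).trans (hC p)
  nlinarith [mul_nonneg hC0 (sq_nonneg ‖p.1‖), mul_nonneg hC0 (sq_nonneg ‖p.2‖)]

theorem mul_mem_quadraticGrowth {h k : E × E → ℝ} (hh : h ∈ quadraticGrowth E)
    (hk : ∀ p, |k p| ≤ 1) : (fun p => h p * k p) ∈ quadraticGrowth E :=
  mem_quadraticGrowth_of_abs_le hh fun p => by
    rw [abs_mul]; exact mul_le_of_le_one_right (abs_nonneg _) (hk p)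

variable [MeasurableSpace E] {μ ν : Measure E} [BorelSpace E] [IsProbabilityMeasure μ] [IsProbabilityMeasure ν]

theorem isDualPair_quadratic (hμ : Integrable (fun x => ‖x‖ ^ 2) μ)
    (hν : Integrable (fun x => ‖x‖ ^ 2) ν) {h : E × E → ℝ} {C : ℝ}
    (hC : ∀ p, |h p| ≤ C * ((1 + ‖p.1‖ ^ 2) + (1 + ‖p.2‖ ^ 2))) :
    IsDualPair μ ν h (fun x => C * (1 + ‖x‖ ^ 2)) fun y => C * (1 + ‖y‖ ^ 2) where
  measurable_fst := by fun_prop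
  measurable_snd := by fun_prop
  integrable_fst := ((integrable_const _).add hμ).const_mul _
  integrable_snd := ((integrable_const _).add hν).const_mul _
  le_add x y := by
    rw [← mul_add]
    exact (le_abs_self _).trans (hC (x, y))

theorem dualValue_le (hμ : Integrable (fun x => ‖x‖ ^ 2) μ)
    (hν : Integrable (fun x => ‖x‖ ^ 2) ν)
    {h : E × E → ℝ} (hh : h ∈ quadraticGrowth E) {f g : E → ℝ}
    (H : IsDualPair μ ν h f g) : dualValue μ ν h ≤ ∫ x, f x ∂μ + ∫ y, g y ∂ν := by
  refine csInf_le ?_ ⟨f, g, H, rfl⟩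
  obtain ⟨C, hC⟩ := hh
  have Q := isDualPair_quadratic (μ := μ) (ν := ν) hμ hν (h := -h) (by simpa using hC)
  refine ⟨-(∫ x, C * (1 + ‖x‖ ^ 2) ∂μ + ∫ y, C * (1 + ‖y‖ ^ 2) ∂ν), ?_⟩
  rintro r ⟨f, g, H, rfl⟩
  have R := H.add Q
  have := integral_add_integral_nonneg R.3 R.4 fun x y => by simpa using R.5 x y
  rw [integral_add H.3 Q.3, integral_add H.4 Q.4] at this
  linarith

theorem le_dualValue (hμ : Integrable (fun x => ‖x‖ ^ 2) μ)
    (hν : Integrable (fun x => ‖x‖ ^ 2) ν)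
    {h : E × E → ℝ} (hh : h ∈ quadraticGrowth E) {B : ℝ}
    (hB : ∀ f g, IsDualPair μ ν h f g → B ≤ ∫ x, f x ∂μ + ∫ y, g y ∂ν) : B ≤ dualValue μ ν h := by
  obtain ⟨C, hC⟩ := hh
  refine le_csInf ⟨_, _, _, isDualPair_quadratic hμ hν hC, rfl⟩ ?_
  rintro r ⟨f, g, H, rfl⟩
  exact hB f g H

theorem dualValue_add_le (hμ : Integrable (fun x => ‖x‖ ^ 2) μ)
    (hν : Integrable (fun x => ‖x‖ ^ 2) ν)
    {h k : E × E → ℝ} (hh : h ∈ quadraticGrowth E)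
    (hk : k ∈ quadraticGrowth E) : dualValue μ ν (h + k) ≤ dualValue μ ν h + dualValue μ ν k := by
  rw [← sub_le_iff_le_add]
  refine le_dualValue hμ hν hh fun f g H => ?_
  rw [sub_le_comm]
  refine le_dualValue hμ hν hk fun f' g' H' => ?_
  have R := H.add H'
  have := dualValue_le hμ hν (add_mem hh hk) R
  rw [integral_add H.3 H'.3, integral_add H.4 H'.4] at this
  linarith

theorem dualValue_smul (hμ : Integrable (fun x => ‖x‖ ^ 2) μ)
    (hν : Integrable (fun x => ‖x‖ ^ 2) ν)
    {c : ℝ} (hc : 0 < c) {h : E × E → ℝ} (hh : h ∈ quadraticGrowth E) :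
    dualValue μ ν (c • h) = c * dualValue μ ν h := by
  have key : ∀ {c : ℝ}, 0 < c → ∀ {h : E × E → ℝ}, h ∈ quadraticGrowth E →
      dualValue μ ν (c • h) ≤ c * dualValue μ ν h := fun {c} hc h hh => by
    rw [← div_le_iff₀' hc]
    refine le_dualValue hμ hν hh fun f g H => ?_
    rw [div_le_iff₀' hc]
    have := dualValue_le hμ hν (Submodule.smul_mem _ c hh) (H.smul hc.le)
    rwa [integral_const_mul, integral_const_mul, ← mul_add] at this
  refine le_antisymm (key hc hh) ?_
  have := key (inv_pos.2 hc) (Submodule.smul_mem _ c hh)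
  rwa [inv_smul_smul₀ hc.ne', inv_mul_eq_div, le_div_iff₀' hc] at this

/-- A linear functional below `dualValue` which is sharp at a given function. -/
theorem exists_linear_le_dualValue (hμ : Integrable (fun x => ‖x‖ ^ 2) μ)
    (hν : Integrable (fun x => ‖x‖ ^ 2) ν)
    (k : quadraticGrowth E) :
    ∃ L : quadraticGrowth E →ₗ[ℝ] ℝ, L k = dualValue μ ν k ∧ ∀ h, L h ≤ dualValue μ ν h := by
  have h0 : dualValue μ ν (0 : E × E → ℝ) = 0 := by
    have := dualValue_smul hμ hν two_pos (zero_mem (quadraticGrowth E))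
    rw [smul_zero] at this
    linarith
  have hneg : -dualValue μ ν (k : E × E → ℝ) ≤ dualValue μ ν (-(k : E × E → ℝ)) := by
    have := dualValue_add_le hμ hν k.2 (neg_mem k.2)
    rw [add_neg_cancel, h0] at this
    linarith
  let ℓ : quadraticGrowth E →ₗ.[ℝ] ℝ :=
    LinearPMap.mkSpanSingleton' k (dualValue μ ν k) fun c hc => by
      rcases smul_eq_zero.1 hc with rfl | rfl
      · simp
      · simp [h0]
  obtain ⟨L, hL, hle⟩ := exists_extension_of_le_sublinear ℓ (fun h => dualValue μ ν h)
    (fun c hc x => dualValue_smul hμ hν hc x.2) (fun x y => dualValue_add_le hμ hν x.2 y.2) (by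
      rintro ⟨x, hx⟩
      obtain ⟨c, rfl⟩ := Submodule.mem_span_singleton.1 hx
      rw [LinearPMap.mkSpanSingleton'_apply]
      rcases lt_trichotomy c 0 with hc | rfl | hc
      · have := dualValue_smul hμ hν (neg_pos.2 hc) (neg_mem k.2)
        rw [smul_neg, neg_smul, neg_neg] at this
        simp only [Submodule.coe_smul, RingHom.id_apply, smul_eq_mul]
        rw [this]
        nlinarith
      · simp [h0]
      · simp [dualValue_smul hμ hν hc k.2])
  refine ⟨L, ?_, hle⟩
  have hk : (1 : ℝ) • k ∈ ℓ.domain := Submodule.mem_span_singleton.2 ⟨1, rfl⟩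
  have := hL ⟨_, hk⟩
  rw [LinearPMap.mkSpanSingleton'_apply] at this
  simpa using this

end Duality

section Representation

open Filter Topology CompactlySupported

variable {E : Type*} [NormedAddCommGroup E]

/-- A continuous cutoff, equal to `1` on the ball of radius `n` and to `0` outside the ball of
radius `n + 1`. -/
def ballCutoff {F : Type*} [NormedAddCommGroup F] (n : ℕ) (p : F) : ℝ := max 0 (min 1 (n + 1 - ‖p‖))

theorem ballCutoff_nonneg (n : ℕ) (p : E) : 0 ≤ ballCutoff n p := le_max_left _ _

theorem ballCutoff_le_one (n : ℕ) (p : E) : ballCutoff n p ≤ 1 :=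
  max_le zero_le_one (min_le_left _ _)

theorem ballCutoff_eq_one {n : ℕ} {p : E} (h : ‖p‖ ≤ n) : ballCutoff n p = 1 := by
  rw [ballCutoff, min_eq_left (by linarith), max_eq_right zero_le_one]

theorem monotone_ballCutoff (p : E) : Monotone fun n => ballCutoff n p := fun m n h => by
  change max 0 (min 1 ((m : ℝ) + 1 - ‖p‖)) ≤ max 0 (min 1 ((n : ℝ) + 1 - ‖p‖))
  gcongr

theorem tendsto_ballCutoff (p : E) : Tendsto (fun n => ballCutoff n p) atTop (𝓝 1) := by
  obtain ⟨N, hN⟩ := exists_nat_ge ‖p‖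
  refine tendsto_const_nhds.congr' ?_
  filter_upwards [eventually_ge_atTop N] with n hn
  exact (ballCutoff_eq_one (hN.trans (by exact_mod_cast hn))).symm

theorem continuous_ballCutoff (n : ℕ) : Continuous fun p : E => ballCutoff n p := by
  unfold ballCutoff
  fun_prop

theorem hasCompactSupport_ballCutoff [ProperSpace E] (n : ℕ) :
    HasCompactSupport fun p : E => ballCutoff n p := by
  refine HasCompactSupport.intro (isCompact_closedBall 0 (n + 1)) fun p hp => ?_
  rw [mem_closedBall_zero_iff, not_le] at hp
  exact max_eq_left ((min_le_right _ _).trans (by linarith))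

theorem quadratic_mul_one_sub_ballCutoff_le (n : ℕ) (p : E × E) :
    ((1 + ‖p.1‖ ^ 2) + (1 + ‖p.2‖ ^ 2)) * (1 - ballCutoff n p) ≤
      {x : E | (n : ℝ) ≤ ‖x‖}.indicator (fun x => 2 * (1 + ‖x‖ ^ 2)) p.1 +
      {x : E | (n : ℝ) ≤ ‖x‖}.indicator (fun x => 2 * (1 + ‖x‖ ^ 2)) p.2 := by
  have hi : ∀ x : E, 0 ≤ {x : E | (n : ℝ) ≤ ‖x‖}.indicator (fun x => 2 * (1 + ‖x‖ ^ 2)) x :=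
    fun x => indicator_nonneg (fun x _ => by positivity) x
  rcases le_total ‖p‖ n with h | h
  · rw [ballCutoff_eq_one h, sub_self, mul_zero]
    exact add_nonneg (hi _) (hi _)
  · refine (mul_le_of_le_one_right (by positivity) (by linarith [ballCutoff_nonneg n p])).trans ?_
    rcases le_total ‖p.1‖ ‖p.2‖ with h' | h'
    · rw [Prod.norm_def, max_eq_right h'] at h
      have : {x : E | (n : ℝ) ≤ ‖x‖}.indicator (fun x => 2 * (1 + ‖x‖ ^ 2)) p.2 = 2 * (1 + ‖p.2‖ ^ 2) :=
        indicator_of_mem (s := {x : E | (n : ℝ) ≤ ‖x‖}) h _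
      have h2 : ‖p.1‖ ^ 2 ≤ ‖p.2‖ ^ 2 := by gcongr
      linarith [hi p.1]
    · rw [Prod.norm_def, max_eq_left h'] at h
      have : {x : E | (n : ℝ) ≤ ‖x‖}.indicator (fun x => 2 * (1 + ‖x‖ ^ 2)) p.1 = 2 * (1 + ‖p.1‖ ^ 2) :=
        indicator_of_mem (s := {x : E | (n : ℝ) ≤ ‖x‖}) h _
      have h2 : ‖p.2‖ ^ 2 ≤ ‖p.1‖ ^ 2 := by gcongr
      linarith [hi p.2]

variable [MeasurableSpace E] [BorelSpace E]

theorem tendsto_integral_quadratic_tail {μ : Measure E} [IsFiniteMeasure μ]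
    (hμ : Integrable (fun x => ‖x‖ ^ 2) μ) :
    Tendsto (fun n : ℕ => ∫ x, {x : E | (n : ℝ) ≤ ‖x‖}.indicator (fun x => 2 * (1 + ‖x‖ ^ 2)) x ∂μ)
      atTop (𝓝 0) := by
  have hi : Integrable (fun x => 2 * (1 + ‖x‖ ^ 2)) μ := ((integrable_const _).add hμ).const_mul _
  have hm : ∀ n : ℕ, MeasurableSet {x : E | (n : ℝ) ≤ ‖x‖} := fun n =>
    measurableSet_le measurable_const measurable_norm
  have := tendsto_integral_of_dominated_convergence (μ := μ) (f := fun _ : E => (0 : ℝ))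
    (F := fun n : ℕ => {x : E | (n : ℝ) ≤ ‖x‖}.indicator (fun x => 2 * (1 + ‖x‖ ^ 2))) _
    (fun n => (hi.indicator (hm n)).1) hi (fun n => ae_of_all _ fun x => ?_)
    (ae_of_all _ fun x => ?_)
  · simpa using this
  · rw [Real.norm_of_nonneg (indicator_nonneg (fun x _ => by positivity) x)]
    exact indicator_le_self' (fun _ _ => by positivity) x
  · obtain ⟨N, hN⟩ := exists_nat_gt ‖x‖
    refine tendsto_const_nhds.congr' ?_
    filter_upwards [eventually_ge_atTop N] with n hn
    refine (indicator_of_notMem ?_ _).symm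
    rw [mem_ofPred_eq, not_le]
    exact hN.trans_le (by exact_mod_cast hn)

variable [ProperSpace E] {μ ν : Measure E} [IsProbabilityMeasure μ] [IsProbabilityMeasure ν]

/-- A positive functional on functions of quadratic growth with marginals `μ` and `ν` is, on
continuous functions, integration against a coupling. -/
theorem exists_isCoupling_integral_eq (hμ : Integrable (fun x => ‖x‖ ^ 2) μ)
    (hν : Integrable (fun x => ‖x‖ ^ 2) ν) (L : quadraticGrowth E →ₗ[ℝ] ℝ)
    (hL : ∀ h : quadraticGrowth E, L h ≤ dualValue μ ν h) :
    ∃ π : Measure (E × E), IsCoupling π μ ν ∧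
      ∀ h : quadraticGrowth E, Continuous (h : E × E → ℝ) → ∫ p, (h : E × E → ℝ) p ∂π = L h := by
  have hdual : ∀ (h : quadraticGrowth E) (f g : E → ℝ), IsDualPair μ ν h f g →
      L h ≤ ∫ x, f x ∂μ + ∫ y, g y ∂ν := fun h f g H => (hL h).trans (dualValue_le hμ hν h.2 H)
  have hpos : ∀ h : quadraticGrowth E, (∀ p, 0 ≤ (h : E × E → ℝ) p) → 0 ≤ L h := fun h hh => by
    have := hdual (-h) (fun _ => 0) (fun _ => 0) ⟨measurable_const, measurable_const,
      integrable_const _, integrable_const _, fun x y => by simpa using hh (x, y)⟩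
    simpa using this
  have hmono : ∀ h k : quadraticGrowth E, (∀ p, (h : E × E → ℝ) p ≤ (k : E × E → ℝ) p) →
      L h ≤ L k := fun h k hhk => by
    have := hpos (k - h) fun p => by simpa using hhk p
    rw [map_sub] at this
    linarith
  have hcc : ∀ f : C_c(E × E, ℝ), (f : E × E → ℝ) ∈ quadraticGrowth E := fun f => by
    obtain ⟨C, hC⟩ := f.hasCompactSupport.exists_bound_of_continuous f.continuous
    exact mem_quadraticGrowth_of_abs_le_const hC
  let Λ : C_c(E × E, ℝ) →ₚ[ℝ] ℝ := PositiveLinearMap.mk₀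
    { toFun := fun f => L ⟨f, hcc f⟩
      map_add' := fun f g => by rw [← map_add]; rfl
      map_smul' := fun c f => by rw [RingHom.id_apply, ← map_smul]; rfl } fun f hf => hpos _ hf
  let π := RealRMK.rieszMeasure Λ
  have hcut : ∀ n (p : E × E), |ballCutoff n p| ≤ 1 := fun n p => by
    rw [abs_of_nonneg (ballCutoff_nonneg n p)]; exact ballCutoff_le_one n p
  let cut : ℕ → quadraticGrowth E → quadraticGrowth E := fun n h =>
    ⟨fun p => (h : E × E → ℝ) p * ballCutoff n p, mul_mem_quadraticGrowth h.2 (hcut n)⟩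
  have hint : ∀ n (h : quadraticGrowth E), Continuous (h : E × E → ℝ) →
      ∫ p, (h : E × E → ℝ) p * ballCutoff n p ∂π = L (cut n h) := fun n h hc =>
    RealRMK.integral_rieszMeasure Λ
      ⟨⟨fun p => (h : E × E → ℝ) p * ballCutoff n p, hc.mul (continuous_ballCutoff n)⟩,
        (hasCompactSupport_ballCutoff n).mul_left⟩
  have hlim : ∀ h : quadraticGrowth E, Tendsto (fun n => L (cut n h)) atTop (𝓝 (L h)) := fun h => by
    obtain ⟨C, hC⟩ := h.2
    have hC0 : 0 ≤ C := by
      have := (abs_nonneg _).trans (hC 0)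
      norm_num at this
      exact this
    let θ : ℕ → E → ℝ := fun n => {x : E | (n : ℝ) ≤ ‖x‖}.indicator (fun x => 2 * (1 + ‖x‖ ^ 2))
    have hm : ∀ n : ℕ, MeasurableSet {x : E | (n : ℝ) ≤ ‖x‖} := fun n =>
      measurableSet_le measurable_const measurable_norm
    have hθm : ∀ n, Measurable (θ n) := fun n => Measurable.indicator (by fun_prop) (hm n)
    have hθμ : ∀ n, Integrable (θ n) μ := fun n =>
      (((integrable_const _).add hμ).const_mul _).indicator (hm n)
    have hθν : ∀ n, Integrable (θ n) ν := fun n =>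
      (((integrable_const _).add hν).const_mul _).indicator (hm n)
    have hb : ∀ n p, |(h : E × E → ℝ) p - (h : E × E → ℝ) p * ballCutoff n p| ≤
        C * θ n p.1 + C * θ n p.2 := fun n p => by
      have h1 : 0 ≤ 1 - ballCutoff n p := by linarith [ballCutoff_le_one n p]
      rw [show (h : E × E → ℝ) p - (h : E × E → ℝ) p * ballCutoff n p =
        (h : E × E → ℝ) p * (1 - ballCutoff n p) by ring, abs_mul, abs_of_nonneg h1, ← mul_add]
      refine (mul_le_mul_of_nonneg_right (hC p) h1).trans ?_
      rw [mul_assoc]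
      exact mul_le_mul_of_nonneg_left (quadratic_mul_one_sub_ballCutoff_le n p) hC0
    have hd : ∀ n, |L (cut n h) - L h| ≤ C * ∫ x, θ n x ∂μ + C * ∫ x, θ n x ∂ν := fun n => by
      rw [← integral_const_mul, ← integral_const_mul]
      refine abs_le.2 ⟨?_, ?_⟩
      · have := hdual (h - cut n h) (fun x => C * θ n x) (fun x => C * θ n x)
          ⟨(hθm n).const_mul C, (hθm n).const_mul C, (hθμ n).const_mul C, (hθν n).const_mul C,
            fun x y => (abs_le.1 (hb n (x, y))).2⟩
        rw [map_sub] at this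
        linarith
      · have := hdual (cut n h - h) (fun x => C * θ n x) (fun x => C * θ n x)
          ⟨(hθm n).const_mul C, (hθm n).const_mul C, (hθμ n).const_mul C, (hθν n).const_mul C,
            fun x y => ?_⟩
        · rwa [map_sub] at this
        · have := (abs_le.1 (hb n (x, y))).1
          simp only [Submodule.coe_sub, Pi.sub_apply, cut]
          linarith
    have hz : Tendsto (fun n => C * ∫ x, θ n x ∂μ + C * ∫ x, θ n x ∂ν) atTop (𝓝 0) := by
      simpa using ((tendsto_integral_quadratic_tail hμ).const_mul C).add
        ((tendsto_integral_quadratic_tail hν).const_mul C)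
    rw [tendsto_iff_dist_tendsto_zero]
    exact squeeze_zero (fun _ => dist_nonneg) hd hz
  let W : quadraticGrowth E := ⟨fun p => (1 + ‖p.1‖ ^ 2) + (1 + ‖p.2‖ ^ 2), 1, fun p => by
    rw [one_mul, abs_of_nonneg (by positivity)]⟩
  have hWc : Continuous (W : E × E → ℝ) := by
    change Continuous fun p : E × E => (1 + ‖p.1‖ ^ 2) + (1 + ‖p.2‖ ^ 2)
    fun_prop
  have hW0 : ∀ p, 0 ≤ (W : E × E → ℝ) p := fun p => by
    change 0 ≤ (1 + ‖p.1‖ ^ 2) + (1 + ‖p.2‖ ^ 2)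
    positivity
  have hWi : Integrable (W : E × E → ℝ) π := by
    refine (lintegral_ofReal_ne_top_iff_integrable hWc.aestronglyMeasurable (ae_of_all _ hW0)).1 ?_
    have ht := lintegral_tendsto_of_tendsto_of_monotone (μ := π)
      (f := fun n p => ENNReal.ofReal ((W : E × E → ℝ) p * ballCutoff n p))
      (F := fun p => ENNReal.ofReal ((W : E × E → ℝ) p))
      (fun n => ((hWc.mul (continuous_ballCutoff n)).measurable.ennreal_ofReal).aemeasurable)
      (ae_of_all _ fun p m n hmn => ENNReal.ofReal_le_ofReal
        (mul_le_mul_of_nonneg_left (monotone_ballCutoff p hmn) (hW0 p)))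
      (ae_of_all _ fun p => (ENNReal.continuous_ofReal.tendsto _).comp
        (by simpa using (tendsto_ballCutoff p).const_mul ((W : E × E → ℝ) p)))
    refine ne_top_of_le_ne_top ENNReal.ofReal_ne_top
      (le_of_tendsto' (b := ENNReal.ofReal (L W)) ht fun n => ?_)
    have hci : Integrable (fun p => (W : E × E → ℝ) p * ballCutoff n p) π :=
      (hWc.mul (continuous_ballCutoff n)).integrable_of_hasCompactSupport
        (hasCompactSupport_ballCutoff n).mul_left
    rw [← ofReal_integral_eq_lintegral_ofReal hci
      (ae_of_all _ fun p => mul_nonneg (hW0 p) (ballCutoff_nonneg n p)), hint n W hWc]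
    exact ENNReal.ofReal_le_ofReal (hmono _ _ fun p =>
      mul_le_of_le_one_right (hW0 p) (ballCutoff_le_one n p))
  have hrep : ∀ h : quadraticGrowth E, Continuous (h : E × E → ℝ) →
      ∫ p, (h : E × E → ℝ) p ∂π = L h := fun h hc => by
    obtain ⟨C, hC⟩ := h.2
    refine tendsto_nhds_unique (tendsto_integral_of_dominated_convergence
      (F := fun n p => (h : E × E → ℝ) p * ballCutoff n p) (fun p => C * (W : E × E → ℝ) p)
      (fun n => (hc.mul (continuous_ballCutoff n)).aestronglyMeasurable) (hWi.const_mul C)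
      (fun n => ae_of_all _ fun p => ?_)
      (ae_of_all _ fun p => by
        simpa using (tendsto_ballCutoff p).const_mul ((h : E × E → ℝ) p))) ?_
    · rw [norm_mul]
      exact (mul_le_of_le_one_right (norm_nonneg _) (hcut n p)).trans (hC p)
    · simp_rw [hint _ h hc]
      exact hlim h
  have hfin : IsFiniteMeasure π := by
    have : Integrable (fun _ : E × E => (1 : ℝ)) π :=
      hWi.mono' aestronglyMeasurable_const (ae_of_all _ fun p => by
        change ‖(1 : ℝ)‖ ≤ (1 + ‖p.1‖ ^ 2) + (1 + ‖p.2‖ ^ 2)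
        rw [norm_one]
        nlinarith [sq_nonneg ‖p.1‖, sq_nonneg ‖p.2‖])
    exact (integrable_const_iff.1 this).resolve_left one_ne_zero
  refine ⟨π, ⟨?_, ?_⟩, hrep⟩
  · refine ext_of_forall_integral_eq_of_IsFiniteMeasure fun f => ?_
    rw [integral_map measurable_fst.aemeasurable f.continuous.aestronglyMeasurable]
    let h : quadraticGrowth E := ⟨fun p => f p.1,
      mem_quadraticGrowth_of_abs_le_const fun p => f.norm_coe_le_norm p.1⟩
    have e := hrep h (f.continuous.comp continuous_fst)
    have h1 := hdual h f (fun _ => 0) ⟨f.continuous.measurable, measurable_const,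
      f.integrable _, integrable_const _, fun x y => by simp [h]⟩
    have h2 := hdual (-h) (fun x => -f x) (fun _ => 0) ⟨f.continuous.measurable.neg,
      measurable_const, (f.integrable _).neg, integrable_const _, fun x y => by simp [h]⟩
    rw [map_neg, integral_neg] at h2
    simp only [integral_zero, add_zero] at h1 h2
    exact e.trans (by linarith)
  · refine ext_of_forall_integral_eq_of_IsFiniteMeasure fun f => ?_
    rw [integral_map measurable_snd.aemeasurable f.continuous.aestronglyMeasurable]
    let h : quadraticGrowth E := ⟨fun p => f p.2,
      mem_quadraticGrowth_of_abs_le_const fun p => f.norm_coe_le_norm p.2⟩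
    have e := hrep h (f.continuous.comp continuous_snd)
    have h1 := hdual h (fun _ => 0) f ⟨measurable_const, f.continuous.measurable,
      integrable_const _, f.integrable _, fun x y => by simp [h]⟩
    have h2 := hdual (-h) (fun _ => 0) (fun x => -f x) ⟨measurable_const,
      f.continuous.measurable.neg, integrable_const _, (f.integrable _).neg, fun x y => by simp [h]⟩
    rw [map_neg, integral_neg] at h2
    simp only [integral_zero, zero_add] at h1 h2
    exact e.trans (by linarith)

/-- Kantorovich duality, with attainment in the primal problem. -/
theorem exists_isCoupling_integral_eq_dualValue (hμ : Integrable (fun x => ‖x‖ ^ 2) μ)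
    (hν : Integrable (fun x => ‖x‖ ^ 2) ν) {h : E × E → ℝ} (hh : h ∈ quadraticGrowth E)
    (hc : Continuous h) : ∃ π : Measure (E × E), IsCoupling π μ ν ∧ ∫ p, h p ∂π = dualValue μ ν h := by
  obtain ⟨L, hLh, hL⟩ := exists_linear_le_dualValue hμ hν ⟨h, hh⟩
  obtain ⟨π, hπ, hrep⟩ := exists_isCoupling_integral_eq hμ hν L hL
  exact ⟨π, hπ, (hrep ⟨h, hh⟩ hc).trans hLh⟩

end Representation

/-- Gibbs variational inequality. -/
theorem integral_le_integral_log_add_log {α : Type*} [MeasurableSpace α] {m μ : Measure α}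
    [IsProbabilityMeasure μ] {h : α → ℝ} (hμ : μ = m.withDensity fun x => ENNReal.ofReal (h x))
    (hent : Integrable (fun x => Real.log (h x)) μ) {φ : α → ℝ} (hφ : Integrable φ μ) {Z : ℝ}
    (hZ : 0 < Z) (hφZ : ∫⁻ x, ENNReal.ofReal (Real.exp (φ x)) ∂m ≤ ENNReal.ofReal Z) :
    ∫ x, φ x ∂μ ≤ ∫ x, Real.log (h x) ∂μ + Real.log Z := by
  obtain ⟨k, hkm, hkle, hk⟩ := exists_measurable_le_lintegral_eq m fun x => ENNReal.ofReal (h x)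
  have hμk : m.withDensity k = μ := by
    have hle : m.withDensity k ≤ μ := hμ ▸ withDensity_mono (ae_of_all _ hkle)
    have : IsFiniteMeasure (m.withDensity k) := isFiniteMeasure_of_le μ hle
    refine Measure.eq_of_le_of_measure_univ_eq hle ?_
    rw [hμ, withDensity_apply _ MeasurableSet.univ, withDensity_apply _ MeasurableSet.univ,
      Measure.restrict_univ, hk]
  set ψ : α → ℝ := fun x => φ x - Real.log (h x) - Real.log Z with hψ
  have hψi : Integrable ψ μ := (hφ.sub hent).sub (integrable_const _)
  have hle : ∫⁻ x, ENNReal.ofReal (Real.exp (ψ x)) ∂μ ≤ 1 := by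
    calc ∫⁻ x, ENNReal.ofReal (Real.exp (ψ x)) ∂μ
        ≤ ∫⁻ x, k x * ENNReal.ofReal (Real.exp (ψ x)) ∂m := by
          rw [← hμk]
          exact lintegral_withDensity_le_lintegral_mul m hkm _
      _ ≤ ∫⁻ x, ENNReal.ofReal Z⁻¹ * ENNReal.ofReal (Real.exp (φ x)) ∂m := by
          refine lintegral_mono fun x => (mul_le_mul_left (hkle x) _).trans ?_
          rcases le_or_gt (h x) 0 with hx | hx
          · simp [ENNReal.ofReal_of_nonpos hx]
          · rw [← ENNReal.ofReal_mul hx.le, ← ENNReal.ofReal_mul (by positivity)]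
            refine ENNReal.ofReal_le_ofReal (le_of_eq ?_)
            rw [hψ, Real.exp_sub, Real.exp_sub, Real.exp_log hx, Real.exp_log hZ]
            field_simp
      _ = ENNReal.ofReal Z⁻¹ * ∫⁻ x, ENNReal.ofReal (Real.exp (φ x)) ∂m :=
          lintegral_const_mul' _ _ ENNReal.ofReal_ne_top
      _ ≤ ENNReal.ofReal Z⁻¹ * ENNReal.ofReal Z := mul_le_mul_right hφZ _
      _ = 1 := by
          rw [← ENNReal.ofReal_mul (by positivity), inv_mul_cancel₀ hZ.ne', ENNReal.ofReal_one]
  have hm : AEStronglyMeasurable (fun x => Real.exp (ψ x)) μ :=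
    Real.continuous_exp.comp_aestronglyMeasurable hψi.1
  have hei : Integrable (fun x => Real.exp (ψ x)) μ :=
    (lintegral_ofReal_ne_top_iff_integrable hm (ae_of_all _ fun x => by positivity)).1
      (ne_top_of_le_ne_top ENNReal.one_ne_top hle)
  have h1 : ∫ x, Real.exp (ψ x) ∂μ ≤ 1 := by
    rw [integral_eq_lintegral_of_nonneg_ae (ae_of_all _ fun x => by positivity) hm]
    exact ENNReal.toReal_le_of_le_ofReal zero_le_one (by simpa using hle)
  have h2 := integral_mono (hψi.add (integrable_const 1)) hei fun x => Real.add_one_le_exp (ψ x)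
  rw [integral_add' hψi (integrable_const _)] at h2
  have h3 : ∫ x, ψ x ∂μ = ∫ x, φ x ∂μ - ∫ x, Real.log (h x) ∂μ - Real.log Z := by
    have : Integrable (fun x => φ x - Real.log (h x)) μ := hφ.sub hent
    rw [hψ, integral_sub this (integrable_const _), integral_sub hφ hent]
    simp
  simp only [integral_const, probReal_univ, smul_eq_mul, mul_one] at h2
  linarith

theorem integrable_exp_neg_abs : Integrable fun t : ℝ => Real.exp (-|t|) := by
  refine (integrable_inv_one_add_sq.const_mul 2).mono' (by fun_prop) (ae_of_all _ fun t => ?_)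
  have h := Real.quadratic_le_exp_of_nonneg (abs_nonneg t)
  rw [sq_abs] at h
  rw [Real.norm_of_nonneg (by positivity), Real.exp_neg, ← div_eq_mul_inv, inv_le_comm₀
    (by positivity) (by positivity), inv_div, div_le_iff₀ two_pos]
  linarith [abs_nonneg t]

theorem hasExpMoments_exp_neg {n : ℕ} {f g : (Fin n → ℝ) → ℝ} (h : ∀ x y, x ⬝ᵥ y ≤ f x + g y) :
    HasExpMoments fun x => ENNReal.ofReal (Real.exp (-f x)) := fun w => by
  let C := ∑ s : Fin n → SignType, |g (w + fun i => (s i : ℝ))|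
  have hle : ∀ x, w ⬝ᵥ x - f x ≤ C + ∑ i, -|x i| := fun x => by
    let s : Fin n → SignType := fun i => SignType.sign (x i)
    have hs : |g (w + fun i => (s i : ℝ))| ≤ C :=
      Finset.single_le_sum (f := fun s : Fin n → SignType => |g (w + fun i => (s i : ℝ))|)
        (fun _ _ => abs_nonneg _) (Finset.mem_univ s)
    have h1 := h x (w + fun i => (s i : ℝ))
    have h2 : x ⬝ᵥ (fun i => (s i : ℝ)) = ∑ i, |x i| :=
      Finset.sum_congr rfl fun i _ => self_mul_sign (x i)
    rw [dotProduct_add, h2, dotProduct_comm] at h1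
    rw [Finset.sum_neg_distrib]
    linarith [le_abs_self (g (w + fun i => (s i : ℝ)))]
  have hi : Integrable fun x : Fin n → ℝ => Real.exp C * ∏ i, Real.exp (-|x i|) :=
    (Integrable.fintype_prod (f := fun (_ : Fin n) (t : ℝ) => Real.exp (-|t|))
      fun _ => integrable_exp_neg_abs).const_mul _
  refine ne_top_of_le_ne_top hi.lintegral_lt_top.ne (lintegral_mono fun x => ?_)
  rw [← ENNReal.ofReal_mul (by positivity), ← Real.exp_add, ← Real.exp_sum, ← Real.exp_add]
  exact ENNReal.ofReal_le_ofReal (Real.exp_le_exp.2 (by linarith [hle x]))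

theorem lintegral_exp_ne_zero {α : Type*} [MeasurableSpace α] {m : Measure α} [NeZero m]
    {φ : α → ℝ} (hφ : Measurable φ) : ∫⁻ x, ENNReal.ofReal (Real.exp (φ x)) ∂m ≠ 0 := fun h => by
  rw [lintegral_eq_zero_iff (by fun_prop)] at h
  obtain ⟨x, hx⟩ := h.exists
  exact (Real.exp_pos (φ x)).not_ge (by simpa using hx)

theorem lintegral_euclideanSpace {n : ℕ} (F : EuclideanSpace ℝ (Fin n) → ℝ≥0∞) :
    ∫⁻ x, F x = ∫⁻ x : Fin n → ℝ, F (WithLp.toLp 2 x) :=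
  ((PiLp.volume_preserving_toLp (Fin n)).lintegral_comp_emb
    (MeasurableEquiv.toLp 2 (Fin n → ℝ)).measurableEmbedding F).symm

theorem inner_toLp_toLp_eq_dotProduct {n : ℕ} (x y : Fin n → ℝ) :
    ⟪WithLp.toLp 2 x, WithLp.toLp 2 y⟫ = x ⬝ᵥ y := by
  simp [PiLp.inner_apply, dotProduct, mul_comm]

/-- A functional Blaschke–Santaló inequality on `ℝⁿ⁺¹`, the second function being recentered by an
exponential tilt. -/
theorem exists_lintegral_exp_neg_mul_le {n : ℕ} {f g : EuclideanSpace ℝ (Fin (n + 1)) → ℝ}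
    (hf : Measurable f) (hg : Measurable g) (h : ∀ x y, ⟪x, y⟫ ≤ f x + g y) :
    ∃ z : EuclideanSpace ℝ (Fin (n + 1)),
      (∫⁻ y, ENNReal.ofReal (Real.exp (-g y))) ≠ ⊤ ∧
      (∫⁻ x, ENNReal.ofReal (Real.exp (⟪z, x⟫ - f x))) ≠ ⊤ ∧
      (∫⁻ y, ENNReal.ofReal (Real.exp (-g y))) * ∫⁻ x, ENNReal.ofReal (Real.exp (⟪z, x⟫ - f x)) ≤
        ENNReal.ofReal ((2 * Real.pi) ^ (n + 1)) := by
  have hfg : ∀ x y : Fin (n + 1) → ℝ, x ⬝ᵥ y ≤ f (WithLp.toLp 2 x) + g (WithLp.toLp 2 y) :=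
    fun x y => by
      rw [← inner_toLp_toLp_eq_dotProduct]; exact h _ _
  have hgf : ∀ x y : Fin (n + 1) → ℝ, x ⬝ᵥ y ≤ g (WithLp.toLp 2 x) + f (WithLp.toLp 2 y) :=
    fun x y => by
      rw [dotProduct_comm, add_comm (g _)]; exact hfg y x
  have htoLp : Measurable fun x : Fin (n + 1) → ℝ => WithLp.toLp 2 x :=
    (MeasurableEquiv.toLp 2 (Fin (n + 1) → ℝ)).measurable
  have hfm := hasExpMoments_exp_neg hfg
  have hgm := hasExpMoments_exp_neg hgf
  obtain ⟨z, hz⟩ := (santaloCentered n).exists_tilt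
    (f := fun y => ENNReal.ofReal (Real.exp (-g (WithLp.toLp 2 y))))
    (g := fun x => ENNReal.ofReal (Real.exp (-f (WithLp.toLp 2 x))))
    ((hg.comp htoLp).neg.exp.ennreal_ofReal) ((hf.comp htoLp).neg.exp.ennreal_ofReal) hgm hfm
    zero_le_one fun x y => by
      rw [← ENNReal.ofReal_mul (by positivity), ← Real.exp_add, one_mul]
      exact ENNReal.ofReal_le_ofReal (Real.exp_le_exp.2 (by linarith [hgf x y]))
  have e : ∫⁻ x, ENNReal.ofReal (Real.exp (⟪WithLp.toLp 2 z, x⟫ - f x)) =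
      ∫⁻ x, ENNReal.ofReal (Real.exp (z ⬝ᵥ x)) *
        ENNReal.ofReal (Real.exp (-f (WithLp.toLp 2 x))) := by
    rw [lintegral_euclideanSpace]
    refine lintegral_congr fun x => ?_
    rw [inner_toLp_toLp_eq_dotProduct, ← ENNReal.ofReal_mul (by positivity), ← Real.exp_add,
      sub_eq_add_neg]
  refine ⟨WithLp.toLp 2 z, ?_, ?_, ?_⟩
  · rw [lintegral_euclideanSpace]
    simpa using hgm 0
  · rw [e]
    exact hfm z
  · rw [e, lintegral_euclideanSpace]
    simpa using hz

theorem neg_entropy_le_of_isDualPair {n : ℕ} {μ ν : Measure (EuclideanSpace ℝ (Fin (n + 1)))}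
    [IsProbabilityMeasure μ] [IsProbabilityMeasure ν] {h₁ h₂ : EuclideanSpace ℝ (Fin (n + 1)) → ℝ}
    (hμac : μ = volume.withDensity fun x => ENNReal.ofReal (h₁ x))
    (hνac : ν = volume.withDensity fun x => ENNReal.ofReal (h₂ x))
    (hμ2 : Integrable (fun x => ‖x‖ ^ 2) μ)
    (hμent : Integrable (fun x => Real.log (h₁ x)) μ)
    (hνent : Integrable (fun x => Real.log (h₂ x)) ν)
    (hcent : ∫ x, x ∂μ = 0) {f g : EuclideanSpace ℝ (Fin (n + 1)) → ℝ}
    (H : IsDualPair μ ν (fun p => ⟪p.1, p.2⟫) f g) :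
    -((∫ x, Real.log (h₁ x) ∂μ) + (∫ x, Real.log (h₂ x) ∂ν) +
      (n + 1 : ℕ) * Real.log (2 * Real.pi)) ≤ ∫ x, f x ∂μ + ∫ y, g y ∂ν := by
  have hfm := H.measurable_fst
  have hgm := H.measurable_snd
  obtain ⟨z, hA, hB, hAB⟩ := exists_lintegral_exp_neg_mul_le hfm hgm H.le_add
  have hA0 := lintegral_exp_ne_zero (m := (volume : Measure (EuclideanSpace ℝ (Fin (n + 1)))))
    hgm.neg
  have hB0 := lintegral_exp_ne_zero (m := (volume : Measure (EuclideanSpace ℝ (Fin (n + 1)))))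
    (φ := fun x => ⟪z, x⟫ - f x) (by fun_prop)
  simp only [Pi.neg_apply] at hA0
  set A := ∫⁻ y, ENNReal.ofReal (Real.exp (-g y))
  set B := ∫⁻ x, ENNReal.ofReal (Real.exp (⟪z, x⟫ - f x))
  have hid : Integrable (fun x => x) μ := by
    refine ((integrable_const 1).add hμ2).mono' measurable_id.aestronglyMeasurable
      (ae_of_all _ fun x => ?_)
    simp only [Pi.add_apply]
    nlinarith [sq_nonneg (‖x‖ - 1)]
  have hz : Integrable (fun x => ⟪z, x⟫) μ := hid.const_inner z
  have hz0 : ∫ x, ⟪z, x⟫ ∂μ = 0 := by rw [integral_inner hid, hcent, inner_zero_right]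
  have hAp := ENNReal.toReal_pos hA0 hA
  have hBp := ENNReal.toReal_pos hB0 hB
  have g₁ := integral_le_integral_log_add_log hμac hμent (hz.sub H.integrable_fst) hBp
    (by rw [ENNReal.ofReal_toReal hB]; rfl)
  have g₂ := integral_le_integral_log_add_log hνac hνent H.integrable_snd.neg hAp
    (by rw [ENNReal.ofReal_toReal hA]; rfl)
  rw [integral_sub' hz H.integrable_fst, hz0] at g₁
  rw [integral_neg'] at g₂
  have hlog : Real.log A.toReal + Real.log B.toReal ≤ (n + 1 : ℕ) * Real.log (2 * Real.pi) := by
    rw [← Real.log_mul hAp.ne' hBp.ne', ← Real.log_pow]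
    refine Real.log_le_log (by positivity) ?_
    rw [← ENNReal.toReal_mul]
    exact ENNReal.toReal_le_of_le_ofReal (by positivity) hAB
  linarith

theorem inner_mem_quadraticGrowth (E : Type*) [NormedAddCommGroup E] [InnerProductSpace ℝ E] :
    (fun p : E × E => ⟪p.1, p.2⟫) ∈ quadraticGrowth E :=
  ⟨1, fun p => (abs_real_inner_le_norm _ _).trans (by nlinarith [sq_nonneg (‖p.1‖ - ‖p.2‖)])⟩

theorem bddBelow_neg_integral_inner {E : Type*} [NormedAddCommGroup E] [InnerProductSpace ℝ E]
    [MeasurableSpace E] [BorelSpace E] [SecondCountableTopology E] {μ ν : Measure E}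
    (hμ : Integrable (fun x => ‖x‖ ^ 2) μ) (hν : Integrable (fun x => ‖x‖ ^ 2) ν) :
    BddBelow (range fun π : {π : Measure (E × E) // IsCoupling π μ ν} =>
      -∫ p, ⟪p.1, p.2⟫ ∂π.1) := by
  refine ⟨-(∫ x, ‖x‖ ^ 2 ∂μ + ∫ x, ‖x‖ ^ 2 ∂ν), ?_⟩
  rintro _ ⟨⟨π, hπ⟩, rfl⟩
  obtain ⟨rfl, rfl⟩ := id hπ
  have h₁ : Integrable (fun p : E × E => ‖p.1‖ ^ 2) π := hμ.comp_measurable measurable_fst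
  have h₂ : Integrable (fun p : E × E => ‖p.2‖ ^ 2) π := hν.comp_measurable measurable_snd
  rw [integral_map measurable_fst.aemeasurable hμ.1, integral_map measurable_snd.aemeasurable hν.1,
    neg_le_neg_iff, ← integral_add h₁ h₂]
  refine integral_mono ((h₁.add h₂).mono' (Measurable.aestronglyMeasurable (by fun_prop))
    (ae_of_all _ fun p => ?_)) (h₁.add h₂) fun p => ?_
  · refine (abs_real_inner_le_norm _ _).trans ?_
    simp only [Pi.add_apply]
    nlinarith [sq_nonneg (‖p.1‖ - ‖p.2‖), sq_nonneg ‖p.1‖, sq_nonneg ‖p.2‖]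
  · refine (real_inner_le_norm _ _).trans ?_
    nlinarith [sq_nonneg (‖p.1‖ - ‖p.2‖), sq_nonneg ‖p.1‖, sq_nonneg ‖p.2‖]

end Auxiliary

/-- **Reformulated symmetrized Talagrand inequality**: for a centered probability measure
`μ = h₁ dx` and a probability measure `ν = h₂ dx` on `ℝ^d`, with finite second moments and
finite entropies relative to Lebesgue measure,
`inf_π (-∫ x·y dπ) ≤ Ent_dx(μ) + Ent_dx(ν) + d log(2π)`,
the infimum running over all couplings `π` of `μ` and `ν`, and `Ent_dx(μ) = ∫ log h₁ dμ`. -/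
theorem symmetrized_talagrand_reformulated (d : ℕ) (hd : 1 ≤ d)
    (μ ν : Measure (EuclideanSpace ℝ (Fin d)))
    [IsProbabilityMeasure μ] [IsProbabilityMeasure ν]
    (h₁ h₂ : EuclideanSpace ℝ (Fin d) → ℝ)
    (hμac : μ = volume.withDensity fun x => ENNReal.ofReal (h₁ x))
    (hνac : ν = volume.withDensity fun x => ENNReal.ofReal (h₂ x))
    (hμ2 : Integrable (fun x => ‖x‖ ^ 2) μ) (hν2 : Integrable (fun x => ‖x‖ ^ 2) ν)
    (hμent : Integrable (fun x => Real.log (h₁ x)) μ)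
    (hνent : Integrable (fun x => Real.log (h₂ x)) ν)
    (hcent : ∫ x, x ∂μ = 0) :
    ⨅ π : {π : Measure (EuclideanSpace ℝ (Fin d) × EuclideanSpace ℝ (Fin d)) //
        IsCoupling π μ ν}, -∫ p, ⟪p.1, p.2⟫ ∂π.1 ≤
      (∫ x, Real.log (h₁ x) ∂μ) + (∫ x, Real.log (h₂ x) ∂ν) + d * Real.log (2 * Real.pi) := by
  obtain ⟨n, rfl⟩ := Nat.exists_eq_add_of_le' hd
  have hgrowth := inner_mem_quadraticGrowth (EuclideanSpace ℝ (Fin (n + 1)))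
  obtain ⟨π, hπ, hval⟩ := exists_isCoupling_integral_eq_dualValue hμ2 hν2 hgrowth (by fun_prop)
  refine (ciInf_le (bddBelow_neg_integral_inner hμ2 hν2) ⟨π, hπ⟩).trans ?_
  rw [hval, neg_le]
  exact le_dualValue hμ2 hν2 hgrowth fun f g H =>
    neg_entropy_le_of_isDualPair hμac hνac hμ2 hμent hνent hcent H
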